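/- arXiv:1712.07361 — 2 statements merged into one kernel-verified Lean document; each statement's English description precedes it below -/
import Mathlib

section
/- Let ρ be an exchangeable probability measure on S^∞ with directing random measure p̃. Assume that, for some p ≥ 1, p̂_n ∈ [S]_p for all n and p̃ ∈ [S]_p with ρ-probability 1, and let {b_n} be an increasing, diverging sequence of positive numbers such that, with ρ-probability 1, E_{p̃^∞}[ ( sup_{n≥1} b_n d^{(p)}(p̃, p̂_n) )^p ] ≤ C_p(p̃) and p̃^∞( limsup_{n→∞} b_n d^{(p)}(p̃, p̂_n) ≤ Y_p(p̃) ) = 1, where C_p(p̃) and Y_p(p̃) are real random variables with ρ[C_p(p̃)] < +∞. Then for every m ∈ ℕ, ρ( limsup_{n→∞} b_n · d^{(p)}_{[[S]_p]}( q_m(ξ^(n)), p̂_n^∞ ∘ ẽ_{n,m}^{−1} ) ≤ Y_p(p̃) ) = 1. -/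
/-!
Given `ξ^(n)`, the predictive law `q_m(ξ^(n))` is the mixture, under the posterior law of `p̃`, of
the laws of the empirical measure of `m` i.i.d. observations from `p̃`. Gluing near-optimal
couplings of `p̃` and `p̂_n`, chosen measurably in `p̃`, and passing to i.i.d. pairs gives
`d(q_m(ξ^(n)), p̂_n^∞ ∘ ẽ_{n,m}⁻¹)^p ≤ E[d(p̃, p̂_n)^p | ξ^(n)]`. After multiplication by `b_n^p`,
Hunt's lemma (Fatou's lemma along the increasing σ-algebras `σ(ξ^(n))`) bounds the upper limit of
the right-hand side by the upper limit of `(b_n d(p̃, p̂_n))^p`, since `sup_n (b_n d(p̃, p̂_n))^p`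
is integrable.

Measurable families of couplings are obtained from a countable family of densities with respect to
product measures, completed to couplings; Radon coordinate laws provide the regular conditional
distributions given `ξ^(n)`.
-/

open MeasureTheory ProbabilityTheory
open scoped ENNReal

noncomputable section

/-- The `p`-Wasserstein-type distance associated with a cost function `c`. -/
noncomputable def wassW {X : Type*} [MeasurableSpace X] (c : X → X → ℝ) (p : ℝ)
    (μ ν : Measure X) : ℝ :=
  sInf {r : ℝ | ∃ γ : Measure (X × X), γ.map Prod.fst = μ ∧ γ.map Prod.snd = ν ∧
    r = (∫ z, c z.1 z.2 ^ p ∂γ) ^ (1 / p)}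

/-- Membership in `[S]_p`: a Borel probability measure with finite `p`-th moment. -/
def MemWp {S : Type*} [MeasurableSpace S] [MetricSpace S] (p : ℝ) (𝔭 : Measure S) : Prop :=
  IsProbabilityMeasure 𝔭 ∧ ∃ x₀ : S, Integrable (fun x => dist x x₀ ^ p) 𝔭

/-- The empirical measure `ẽ_{n,m}(ω) = (1/m) Σ_{i=1}^m δ_{ω_{i+n}}`. -/
noncomputable def empShift {S : Type*} [MeasurableSpace S] (n m : ℕ) (ω : ℕ → S) :
    Measure S :=
  (m : ℝ≥0∞)⁻¹ • ∑ i ∈ Finset.range m, Measure.dirac (ω (i + n))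

section CondDistrib

variable {Ω E F : Type*} {mΩ : MeasurableSpace Ω} {mE : MeasurableSpace E}
  {mF : MeasurableSpace F} {P : Measure Ω} {X : Ω → E} {Y : Ω → F} {κ : Kernel E F}

lemma hasCondDistrib_of_setLIntegral [IsFiniteMeasure P] [IsFiniteKernel κ] (hX : Measurable X)
    (hY : AEMeasurable Y P)
    (h : ∀ A, MeasurableSet A → ∀ B, MeasurableSet B →
      P (X ⁻¹' A ∩ Y ⁻¹' B) = ∫⁻ ω in X ⁻¹' A, κ (X ω) B ∂P) :
    HasCondDistrib Y X κ P := by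
  refine ⟨hX.aemeasurable.prodMk hY, Measure.ext_prod fun {A B} hA hB => ?_⟩
  rw [Measure.map_apply_of_aemeasurable (hX.aemeasurable.prodMk hY) (hA.prod hB),
    Measure.compProd_apply_prod hA hB, setLIntegral_map hA (κ.measurable_coe hB) hX]
  exact h A hA B hB

lemma lintegral_of_hasCondDistrib [SFinite P] [IsSFiniteKernel κ] (h : HasCondDistrib Y X κ P)
    {f : E × F → ℝ≥0∞} (hf : Measurable f) :
    ∫⁻ ω, f (X ω, Y ω) ∂P = ∫⁻ ω, ∫⁻ y, f (X ω, y) ∂κ (X ω) ∂P := by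
  rw [← lintegral_map' hf.aemeasurable h.aemeasurable, h.map_eq, Measure.lintegral_compProd hf,
    lintegral_map' hf.lintegral_kernel_prod_right'.aemeasurable h.aemeasurable_fst]

lemma measurable_essSup_kernel [IsSFiniteKernel κ] {f : E × F → ℝ≥0∞} (hf : Measurable f) :
    Measurable fun x => essSup (fun y => f (x, y)) (κ x) := by
  refine measurable_of_Iic fun c => ?_
  have essSup_le_iff (x : E) :
      essSup (fun y => f (x, y)) (κ x) ≤ c ↔ κ x (Prod.mk x ⁻¹' {z | c < f z}) = 0 := by
    refine ⟨fun hx => measure_eq_zero_iff_ae_notMem.2 ?_, fun hx => essSup_le_of_ae_le c ?_⟩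
    · filter_upwards [ae_le_essSup (f := fun y => f (x, y))] with y hy using not_lt.2 (hy.trans hx)
    · filter_upwards [measure_eq_zero_iff_ae_notMem.1 hx] with y hy using not_lt.1 hy
  have h_lt : MeasurableSet {z : E × F | c < f z} := measurableSet_lt measurable_const hf
  have h_null := Kernel.measurable_kernel_prodMk_left (κ := κ) h_lt (measurableSet_singleton 0)
  simpa only [Set.preimage, Set.mem_Iic, essSup_le_iff, Set.mem_singleton_iff] using h_null

lemma ae_le_of_hasCondDistrib [SFinite P] [IsSFiniteKernel κ] (h : HasCondDistrib Y X κ P)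
    {f : E × F → ℝ≥0∞} (hf : Measurable f) {c : Ω → ℝ≥0∞}
    (hle : ∀ᵐ ω ∂P, ∀ᵐ y ∂κ (X ω), f (X ω, y) ≤ c ω) :
    ∀ᵐ ω ∂P, f (X ω, Y ω) ≤ c ω := by
  obtain ⟨u, hu, hu_eq⟩ : ∃ u : E → ℝ≥0∞, Measurable u ∧
      ∀ x, u x = essSup (fun y => f (x, y)) (κ x) :=
    ⟨_, measurable_essSup_kernel hf, fun _ => rfl⟩
  have h_compProd : ∀ᵐ z ∂(P.map X ⊗ₘ κ), f z ≤ u z.1 := by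
    refine (Measure.ae_compProd_iff (measurableSet_le hf (hu.comp measurable_fst))).2
      (.of_forall fun x => ?_)
    simpa only [Function.comp_apply, hu_eq] using ae_le_essSup (f := fun y => f (x, y))
  rw [← h.map_eq] at h_compProd
  filter_upwards [ae_of_ae_map h.aemeasurable h_compProd, hle] with ω h_le_u hω
  exact h_le_u.trans ((hu_eq _).trans_le (essSup_le_of_ae_le _ hω))

lemma ae_ae_of_hasCondDistrib [SFinite P] [IsSFiniteKernel κ] (h : HasCondDistrib Y X κ P)
    {p : E × F → Prop} (hp : MeasurableSet {z | p z}) (hXY : ∀ᵐ ω ∂P, p (X ω, Y ω)) :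
    ∀ᵐ ω ∂P, ∀ᵐ y ∂κ (X ω), p (X ω, y) := by
  rw [← ae_map_iff h.aemeasurable hp, h.map_eq] at hXY
  exact ae_of_ae_map h.aemeasurable_fst (Measure.ae_ae_of_ae_compProd hXY)

lemma ae_ae_eq_of_hasCondDistrib_id {X : Ω → E} {κ : Kernel E Ω} [SFinite P] [IsSFiniteKernel κ]
    [MeasurableEq E] (hX : Measurable X) (h : HasCondDistrib id X κ P) :
    ∀ᵐ ω ∂P, ∀ᵐ ω' ∂κ (X ω), X ω' = X ω :=
  ae_ae_of_hasCondDistrib h (p := fun z => X z.2 = z.1)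
    (measurableSet_eq_fun (hX.comp measurable_snd) measurable_fst) (.of_forall fun _ => rfl)

lemma ae_eq_of_hasCondDistrib [IsFiniteMeasure P] {η : Kernel E F} [IsFiniteKernel κ]
    [IsFiniteKernel η] {s : Set F} (hs : MeasurableSet s) [MeasurableSpace.CountablyGenerated s]
    (hne : s.Nonempty) (hκ : HasCondDistrib Y X κ P) (hη : HasCondDistrib Y X η P)
    (hY : ∀ᵐ ω ∂P, Y ω ∈ s) :
    ∀ᵐ ω ∂P, κ (X ω) = η (X ω) := by
  obtain ⟨r, hr, hrs⟩ := (MeasurableEmbedding.subtype_coe hs).exists_measurable_extend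
    measurable_id fun _ => hne.to_subtype
  have h_map : κ.map r =ᵐ[P.map X] η.map r := by
    refine Kernel.ae_eq_of_compProd_eq ?_
    rw [Measure.compProd_map hr, Measure.compProd_map hr, ← hκ.map_eq, ← hη.map_eq]
  have map_retract {μ : Measure F} (hμ : ∀ᵐ y ∂μ, y ∈ s) : (μ.map r).map (↑) = μ := by
    rw [Measure.map_map measurable_subtype_coe hr]
    refine (Measure.map_congr ?_).trans Measure.map_id
    filter_upwards [hμ] with y hy
    exact congrArg Subtype.val (congrFun hrs ⟨y, hy⟩)
  have h_mem : MeasurableSet {z : E × F | z.2 ∈ s} := measurable_snd hs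
  filter_upwards [ae_of_ae_map hκ.aemeasurable_fst h_map, ae_ae_of_hasCondDistrib hκ h_mem hY,
    ae_ae_of_hasCondDistrib hη h_mem hY] with ω h_eq hκs hηs
  rw [Kernel.map_apply _ hr, Kernel.map_apply _ hr] at h_eq
  rw [← map_retract hκs, h_eq, map_retract hηs]

lemma setLIntegral_of_hasCondDistrib_id {X : Ω → E} {κ : Kernel E Ω} [SFinite P]
    [IsSFiniteKernel κ] (hX : Measurable X) (h : HasCondDistrib id X κ P) {f : Ω → ℝ≥0∞}
    (hf : Measurable f) {A : Set E} (hA : MeasurableSet A) :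
    ∫⁻ ω in X ⁻¹' A, ∫⁻ ω', f ω' ∂κ (X ω) ∂P = ∫⁻ ω in X ⁻¹' A, f ω ∂P := by
  have hg : Measurable fun z : E × Ω => A.indicator (fun _ => f z.2) z.1 :=
    Measurable.ite (measurable_fst hA) (hf.comp measurable_snd) measurable_const
  have key := lintegral_of_hasCondDistrib h hg
  rw [← lintegral_indicator (hX hA), ← lintegral_indicator (hX hA)]
  refine Eq.trans (lintegral_congr fun ω => ?_) key.symm
  by_cases hω : X ω ∈ A <;> simp [Set.indicator, hω]

lemma condExp_ae_eq_of_hasCondDistrib_id {X : Ω → E} {κ : Kernel E Ω} [IsFiniteMeasure P]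
    [IsSFiniteKernel κ] (hX : Measurable X) (h : HasCondDistrib id X κ P) {f : Ω → ℝ≥0∞}
    (hf : Measurable f) (hfi : ∫⁻ ω, f ω ∂P ≠ ∞) :
    (fun ω => (∫⁻ ω', f ω' ∂κ (X ω)).toReal) =ᵐ[P] P[fun ω => (f ω).toReal | mE.comap X] := by
  have h_int : Measurable fun x => ∫⁻ ω', f ω' ∂κ x := hf.lintegral_kernel
  have h_intX : Measurable fun ω => ∫⁻ ω', f ω' ∂κ (X ω) := h_int.comp hX
  have h_ne_top : ∫⁻ ω, ∫⁻ ω', f ω' ∂κ (X ω) ∂P ≠ ∞ := by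
    simpa using (setLIntegral_of_hasCondDistrib_id hX h hf .univ).trans_ne (by simpa using hfi)
  refine ae_eq_condExp_of_forall_setIntegral_eq hX.comap_le
    (integrable_toReal_of_lintegral_ne_top hf.aemeasurable hfi)
    (fun _ _ _ => (integrable_toReal_of_lintegral_ne_top h_intX.aemeasurable
      h_ne_top).integrableOn) ?_
    (h_int.comp (comap_measurable X)).ennreal_toReal.stronglyMeasurable.aestronglyMeasurable
  rintro _ ⟨A, hA, rfl⟩ _
  rw [integral_toReal h_intX.aemeasurable (ae_restrict_of_ae (ae_lt_top h_intX h_ne_top)),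
    integral_toReal hf.aemeasurable (ae_restrict_of_ae (ae_lt_top hf hfi)),
    setLIntegral_of_hasCondDistrib_id hX h hf hA]

end CondDistrib

section CondFatou

variable {Ω : Type*} {mΩ : MeasurableSpace Ω} {P : Measure Ω} [IsFiniteMeasure P]
  {E : ℕ → Type*} [∀ n, MeasurableSpace (E n)] {X : (n : ℕ) → Ω → E n}
  {κ : (n : ℕ) → Kernel (E n) Ω} [∀ n, IsSFiniteKernel (κ n)]

lemma ae_tendsto_lintegral_of_hasCondDistrib_id (hX : ∀ n, Measurable (X n))
    (hmono : Monotone fun n => MeasurableSpace.comap (X n) inferInstance)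
    (hgen : ⨆ n, MeasurableSpace.comap (X n) inferInstance = mΩ)
    (h : ∀ n, HasCondDistrib id (X n) (κ n) P) {f : Ω → ℝ≥0∞} (hf : Measurable f)
    (hfi : ∫⁻ ω, f ω ∂P ≠ ∞) :
    ∀ᵐ ω ∂P, Filter.Tendsto (fun n => ∫⁻ ω', f ω' ∂κ n (X n ω)) Filter.atTop (nhds (f ω)) := by
  let ℱ : Filtration ℕ mΩ := ⟨fun n => MeasurableSpace.comap (X n) inferInstance, hmono,
    fun n => (hX n).comap_le⟩
  have h_levy := (integrable_toReal_of_lintegral_ne_top hf.aemeasurable hfi).tendsto_ae_condExp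
    (ℱ := ℱ) (by rw [show ⨆ n, ℱ n = mΩ from hgen]; exact hf.ennreal_toReal.stronglyMeasurable)
  have h_lt_top (n : ℕ) : ∀ᵐ ω ∂P, ∫⁻ ω', f ω' ∂κ n (X n ω) < ∞ := by
    refine ae_lt_top (hf.lintegral_kernel.comp (hX n)) ?_
    simpa using (setLIntegral_of_hasCondDistrib_id (hX n) (h n) hf .univ).trans_ne
      (by simpa using hfi)
  filter_upwards [h_levy, ae_all_iff.2 h_lt_top, ae_lt_top hf hfi,
    ae_all_iff.2 fun n => condExp_ae_eq_of_hasCondDistrib_id (hX n) (h n) hf hfi]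
    with ω h_lim h_lt hω h_condExp
  have h_toReal := ENNReal.tendsto_ofReal (h_lim.congr fun n => (h_condExp n).symm)
  simpa only [ENNReal.ofReal_toReal hω.ne, ENNReal.ofReal_toReal (h_lt _).ne] using h_toReal

-- Hunt's conditional form of Fatou's lemma: bound `Z n` by the tail supremum from a fixed `N ≤ n`
-- and apply Lévy's upward theorem to that single function before letting `N → ∞`.
lemma ae_limsup_lintegral_le_of_hasCondDistrib_id (hX : ∀ n, Measurable (X n))
    (hmono : Monotone fun n => MeasurableSpace.comap (X n) inferInstance)
    (hgen : ⨆ n, MeasurableSpace.comap (X n) inferInstance = mΩ)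
    (h : ∀ n, HasCondDistrib id (X n) (κ n) P) {Z : ℕ → Ω → ℝ≥0∞} (hZ : ∀ n, Measurable (Z n))
    (hZi : ∫⁻ ω, ⨆ n, Z n ω ∂P ≠ ∞) :
    ∀ᵐ ω ∂P, Filter.limsup (fun n => ∫⁻ ω', Z n ω' ∂κ n (X n ω)) Filter.atTop
      ≤ Filter.limsup (fun n => Z n ω) Filter.atTop := by
  have h_tail (N : ℕ) : ∀ᵐ ω ∂P, Filter.Tendsto (fun n => ∫⁻ ω', ⨆ i, Z (i + N) ω' ∂κ n (X n ω))
      Filter.atTop (nhds (⨆ i, Z (i + N) ω)) := by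
    refine ae_tendsto_lintegral_of_hasCondDistrib_id hX hmono hgen h
      (.iSup fun i => hZ (i + N)) (ne_top_of_le_ne_top hZi (lintegral_mono fun ω => ?_))
    exact iSup_le fun i => le_iSup (fun n => Z n ω) (i + N)
  filter_upwards [ae_all_iff.2 h_tail] with ω hω
  rw [Filter.limsup_eq_iInf_iSup_of_nat' (u := fun n => Z n ω)]
  refine le_iInf fun N => (Filter.limsup_le_limsup ?_).trans (hω N).limsup_eq.le
  filter_upwards [Filter.eventually_ge_atTop N] with n hn
  refine lintegral_mono fun ω' => ?_
  simpa only [Nat.sub_add_cancel hn] using le_iSup (fun i => Z (i + N) ω') (n - N)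

end CondFatou

section ExistenceCondDistrib

lemma exists_hasCondDistrib_of_leftInverse {Ω E F C : Type*} [MeasurableSpace Ω]
    [MeasurableSpace E] [MeasurableSpace F] [MeasurableSpace C] [StandardBorelSpace C] [Nonempty C]
    {P : Measure Ω} [IsFiniteMeasure P] {X : Ω → E} {Y : Ω → F} (hX : AEMeasurable X P)
    (hY : AEMeasurable Y P) {f : F → C} {r : C → F} (hf : Measurable f) (hr : Measurable r)
    (h : ∀ᵐ ω ∂P, r (f (Y ω)) = Y ω) :
    ∃ κ : Kernel E F, IsMarkovKernel κ ∧ HasCondDistrib Y X κ P := by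
  have h_code : HasCondDistrib (f ∘ Y) X (condDistrib (f ∘ Y) X P) P :=
    ⟨by fun_prop, (compProd_map_condDistrib (by fun_prop)).symm⟩
  refine ⟨(condDistrib (f ∘ Y) X P).map r, Kernel.IsMarkovKernel.map _ hr,
    (h_code.comp_left hr).congr ?_⟩
  filter_upwards [h] with ω hω using congrArg (Prod.mk (X ω)) hω.symm

lemma measurableSet_of_isSigmaCompact {E : Type*} [TopologicalSpace E] [T2Space E]
    [MeasurableSpace E] [OpensMeasurableSpace E] {s : Set E} (hs : IsSigmaCompact s) :
    MeasurableSet s := by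
  obtain ⟨K, hK, rfl⟩ := hs
  exact .iUnion fun n => (hK n).measurableSet

lemma exists_isSigmaCompact_ae_mem {E : Type*} [TopologicalSpace E] [T2Space E]
    [MeasurableSpace E] [OpensMeasurableSpace E] (μ : Measure E) [IsFiniteMeasure μ]
    [μ.InnerRegular] :
    ∃ s, IsSigmaCompact s ∧ ∀ᵐ x ∂μ, x ∈ s := by
  have h_tight : IsTightMeasureSet {μ} := isTightMeasureSet_singleton_of_innerRegular
  rw [isTightMeasureSet_iff_exists_isCompact_measure_compl_le] at h_tight
  choose K hK hμK using fun n : ℕ => h_tight (n : ℝ≥0∞)⁻¹ (by simp)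
  refine ⟨⋃ n, K n, isSigmaCompact_iUnion_of_isCompact K hK, ?_⟩
  refine nonpos_iff_eq_zero.1 (ge_of_tendsto' ENNReal.tendsto_inv_nat_nhds_zero fun n => ?_)
  exact (measure_mono (Set.compl_subset_compl.2 (Set.subset_iUnion K n))).trans (hμK n μ rfl)

lemma exists_measurable_leftInverse_coe_completion {S : Type*} [MetricSpace S]
    [MeasurableSpace S] [BorelSpace S] [Nonempty S]
    [MeasurableSpace (UniformSpace.Completion S)] [BorelSpace (UniformSpace.Completion S)]
    {T : Set S} (hT : IsSigmaCompact T) :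
    ∃ r : UniformSpace.Completion S → S, Measurable r ∧
      ∀ x ∈ T, r (x : UniformSpace.Completion S) = x := by
  let f (x : T) : UniformSpace.Completion S := (x : S)
  have hf : Topology.IsEmbedding f :=
    (UniformSpace.Completion.isUniformEmbedding_coe S).isEmbedding.comp .subtypeVal
  have h_range : MeasurableSet (Set.range f) := by
    rw [Set.range_comp' (fun x : S => (x : UniformSpace.Completion S)), Subtype.range_coe]
    exact measurableSet_of_isSigmaCompact (hT.image (UniformSpace.Completion.continuous_coe S))
  obtain ⟨r, hr, hrf⟩ := (hf.measurableEmbedding h_range).exists_measurable_extend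
    measurable_subtype_coe fun _ => inferInstance
  exact ⟨r, hr, fun x hx => congrFun hrf ⟨x, hx⟩⟩

-- `S` need not be standard Borel, but the inner regular one-dimensional marginals live on a
-- `σ`-compact set, which is a Borel subset of the Polish space `UniformSpace.Completion S`.
lemma exists_hasCondDistrib_id_pi {S ι E : Type*} [Countable ι] [MetricSpace S]
    [TopologicalSpace.SeparableSpace S] [MeasurableSpace S] [BorelSpace S] [Nonempty S]
    [MeasurableSpace E] (P : Measure (ι → S)) [IsFiniteMeasure P]
    (hP : ∀ i, (P.map fun ω => ω i).InnerRegular) {X : (ι → S) → E} (hX : AEMeasurable X P) :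
    ∃ κ : Kernel E (ι → S), IsMarkovKernel κ ∧ HasCondDistrib id X κ P := by
  let _ : MeasurableSpace (UniformSpace.Completion S) := borel _
  have : BorelSpace (UniformSpace.Completion S) := ⟨rfl⟩
  have : SecondCountableTopology (UniformSpace.Completion S) :=
    UniformSpace.secondCountable_of_separable _
  have : Nonempty (UniformSpace.Completion S) := ‹Nonempty S›.map (↑)
  have h_coe : Measurable fun x : S => (x : UniformSpace.Completion S) :=
    (UniformSpace.Completion.continuous_coe S).measurable
  choose T hT hPT using fun i => exists_isSigmaCompact_ae_mem (P.map fun ω => ω i)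
  obtain ⟨r, hr, hrT⟩ := exists_measurable_leftInverse_coe_completion (isSigmaCompact_iUnion T hT)
  refine exists_hasCondDistrib_of_leftInverse hX aemeasurable_id
    (f := fun ω i => (ω i : UniformSpace.Completion S)) (r := fun z i => r (z i))
    (by fun_prop) (by fun_prop) ?_
  filter_upwards [ae_all_iff.2 fun i =>
    ae_of_ae_map (measurable_pi_apply i).aemeasurable (hPT i)] with ω hω
  exact funext fun i => hrT _ (Set.mem_iUnion_of_mem i (hω i))

end ExistenceCondDistrib

section CouplingDensity

open Filter Topology

variable {X Y : Type*} [MeasurableSpace X] [MeasurableSpace Y]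
  {P : Measure X} {Q : Measure Y} {f : X × Y → ℝ≥0∞}

lemma map_fst_withDensity_prod [SFinite P] [SFinite Q] (hf : Measurable f) :
    ((P.prod Q).withDensity f).map Prod.fst = P.withDensity fun x => ∫⁻ y, f (x, y) ∂Q := by
  ext A hA
  rw [Measure.map_apply measurable_fst hA, withDensity_apply _ (measurable_fst hA),
    withDensity_apply _ hA, ← Set.prod_univ, setLIntegral_prod _ hf.aemeasurable,
    Measure.restrict_univ]

lemma map_snd_withDensity_prod [SFinite P] [SFinite Q] (hf : Measurable f) :
    ((P.prod Q).withDensity f).map Prod.snd = Q.withDensity fun y => ∫⁻ x, f (x, y) ∂P := by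
  ext A hA
  rw [Measure.map_apply measurable_snd hA, withDensity_apply _ (measurable_snd hA),
    withDensity_apply _ hA, ← Set.univ_prod, setLIntegral_prod_symm _ hf.aemeasurable,
    Measure.restrict_univ]

/-- `f` is the density, with respect to `P ⊗ Q`, of a measure whose marginals are at most `P`
and `Q`: a coupling of `P` and `Q` with some mass missing. -/
structure IsSubcouplingDensity (P : Measure X) (Q : Measure Y) (f : X × Y → ℝ≥0∞) : Prop where
  measurable : Measurable f
  fst_le : ∀ᵐ x ∂P, ∫⁻ y, f (x, y) ∂Q ≤ 1
  snd_le : ∀ᵐ y ∂Q, ∫⁻ x, f (x, y) ∂P ≤ 1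

/-- The density with respect to `P ⊗ Q` of the coupling of the probability measures `P` and `Q`
obtained from a subcoupling density `f` by adding the normalized product of the missing marginals.
If no mass is missing then the added term is `∞ * 0 = 0` almost everywhere. -/
def completedDensity (P : Measure X) (Q : Measure Y) (f : X × Y → ℝ≥0∞) (z : X × Y) : ℝ≥0∞ :=
  f z + (1 - ∫⁻ x, ∫⁻ y, f (x, y) ∂Q ∂P)⁻¹ *
    ((1 - ∫⁻ y, f (z.1, y) ∂Q) * (1 - ∫⁻ x, f (x, z.2) ∂P))

lemma measurable_completedDensity [SFinite P] [SFinite Q] (hf : Measurable f) :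
    Measurable (completedDensity P Q f) := by
  have : Measurable fun x => ∫⁻ y, f (x, y) ∂Q := hf.lintegral_prod_right'
  have : Measurable fun y => ∫⁻ x, f (x, y) ∂P := hf.lintegral_prod_left'
  unfold completedDensity
  fun_prop

lemma completedDensity_swap [SFinite P] [SFinite Q] (hf : Measurable f) (z : X × Y) :
    completedDensity Q P (f ∘ Prod.swap) z.swap = completedDensity P Q f z := by
  simp only [completedDensity, Function.comp_apply, Prod.swap_swap, Prod.swap_prod_mk,
    Prod.fst_swap, Prod.snd_swap]
  rw [lintegral_lintegral_swap (f := fun x y => f (x, y)) hf.aemeasurable, mul_comm (1 - _)]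

namespace IsSubcouplingDensity

lemma swap (h : IsSubcouplingDensity P Q f) : IsSubcouplingDensity Q P (f ∘ Prod.swap) :=
  ⟨h.measurable.comp measurable_swap, h.snd_le, h.fst_le⟩

variable [IsProbabilityMeasure P] [IsProbabilityMeasure Q]

lemma lintegral_missing_fst (h : IsSubcouplingDensity P Q f) :
    ∫⁻ x, (1 - ∫⁻ y, f (x, y) ∂Q) ∂P = 1 - ∫⁻ x, ∫⁻ y, f (x, y) ∂Q ∂P := by
  have hfin : ∫⁻ x, ∫⁻ y, f (x, y) ∂Q ∂P ≠ ∞ :=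
    ne_top_of_le_ne_top ENNReal.one_ne_top ((lintegral_mono_ae h.fst_le).trans (by simp))
  rw [lintegral_sub h.measurable.lintegral_prod_right' hfin h.fst_le, lintegral_one, measure_univ]

lemma lintegral_missing_snd (h : IsSubcouplingDensity P Q f) :
    ∫⁻ y, (1 - ∫⁻ x, f (x, y) ∂P) ∂Q = 1 - ∫⁻ x, ∫⁻ y, f (x, y) ∂Q ∂P := by
  rw [lintegral_lintegral_swap (f := fun x y => f (x, y)) h.measurable.aemeasurable]
  exact h.swap.lintegral_missing_fst

lemma ae_lintegral_completedDensity (h : IsSubcouplingDensity P Q f) :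
    ∀ᵐ x ∂P, ∫⁻ y, completedDensity P Q f (x, y) ∂Q = 1 := by
  have hf := h.measurable
  have : Measurable fun x => ∫⁻ y, f (x, y) ∂Q := h.measurable.lintegral_prod_right'
  have : Measurable fun y => ∫⁻ x, f (x, y) ∂P := h.measurable.lintegral_prod_left'
  have hmissing := h.lintegral_missing_fst
  have hmarginal (x : X) : ∫⁻ y, completedDensity P Q f (x, y) ∂Q = ∫⁻ y, f (x, y) ∂Q +
      (1 - ∫⁻ x, ∫⁻ y, f (x, y) ∂Q ∂P)⁻¹ *
        ((1 - ∫⁻ y, f (x, y) ∂Q) * (1 - ∫⁻ x, ∫⁻ y, f (x, y) ∂Q ∂P)) := by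
    simp only [completedDensity]
    rw [lintegral_add_left (by fun_prop), lintegral_const_mul _ (by fun_prop),
      lintegral_const_mul _ (by fun_prop), h.lintegral_missing_snd]
  obtain ⟨M, hM⟩ : ∃ M, 1 - ∫⁻ x, ∫⁻ y, f (x, y) ∂Q ∂P = M := ⟨_, rfl⟩
  simp only [hM] at hmissing hmarginal
  rcases eq_or_ne M 0 with rfl | hM0
  · filter_upwards [h.fst_le, (lintegral_eq_zero_iff (by fun_prop)).1 hmissing] with x hle hzero
    have hge : 1 ≤ ∫⁻ y, f (x, y) ∂Q := tsub_eq_zero_iff_le.1 hzero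
    rw [hmarginal, mul_zero, mul_zero, add_zero, le_antisymm hle hge]
  · have hMtop : M ≠ ∞ := hM ▸ ENNReal.sub_ne_top ENNReal.one_ne_top
    filter_upwards [h.fst_le] with x hle
    rw [hmarginal, mul_left_comm, ENNReal.inv_mul_cancel hM0 hMtop, mul_one,
      add_tsub_cancel_of_le hle]

lemma map_fst_completedDensity (h : IsSubcouplingDensity P Q f) :
    ((P.prod Q).withDensity (completedDensity P Q f)).map Prod.fst = P := by
  rw [map_fst_withDensity_prod (measurable_completedDensity h.measurable),
    withDensity_congr_ae h.ae_lintegral_completedDensity]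
  exact withDensity_one

lemma map_snd_completedDensity (h : IsSubcouplingDensity P Q f) :
    ((P.prod Q).withDensity (completedDensity P Q f)).map Prod.snd = Q := by
  have hswap : ∀ᵐ y ∂Q, ∫⁻ x, completedDensity P Q f (x, y) ∂P = 1 := by
    filter_upwards [h.swap.ae_lintegral_completedDensity] with y hy
    simp only [← completedDensity_swap h.measurable]
    exact hy
  rw [map_snd_withDensity_prod (measurable_completedDensity h.measurable),
    withDensity_congr_ae hswap]
  exact withDensity_one

lemma lintegral_completedDensity_le (h : IsSubcouplingDensity P Q f) {c : X × Y → ℝ≥0∞}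
    (hc : Measurable c) {a : X → ℝ≥0∞} (ha : Measurable a) {b : Y → ℝ≥0∞} (hb : Measurable b)
    (hcab : ∀ z, c z ≤ a z.1 + b z.2) :
    ∫⁻ z, c z ∂((P.prod Q).withDensity (completedDensity P Q f)) ≤
      ∫⁻ z, f z * c z ∂(P.prod Q) + (∫⁻ x, a x * (1 - ∫⁻ y, f (x, y) ∂Q) ∂P +
        ∫⁻ y, b y * (1 - ∫⁻ x, f (x, y) ∂P) ∂Q) := by
  have hf := h.measurable
  have : Measurable fun x => ∫⁻ y, f (x, y) ∂Q := hf.lintegral_prod_right'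
  have : Measurable fun y => ∫⁻ x, f (x, y) ∂P := hf.lintegral_prod_left'
  obtain ⟨M, hM⟩ : ∃ M, 1 - ∫⁻ x, ∫⁻ y, f (x, y) ∂Q ∂P = M := ⟨_, rfl⟩
  have hbound (z : X × Y) : (completedDensity P Q f * c) z ≤ f z * c z + M⁻¹ *
      ((a z.1 * (1 - ∫⁻ y, f (z.1, y) ∂Q)) * (1 - ∫⁻ x, f (x, z.2) ∂P) +
        (1 - ∫⁻ y, f (z.1, y) ∂Q) * (b z.2 * (1 - ∫⁻ x, f (x, z.2) ∂P))) := by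
    simp only [Pi.mul_apply, completedDensity, add_mul, hM]
    refine add_le_add le_rfl ((mul_le_mul_right (hcab z) _).trans (le_of_eq ?_))
    ring
  rw [lintegral_withDensity_eq_lintegral_mul _ (measurable_completedDensity hf) hc]
  refine (lintegral_mono hbound).trans ?_
  rw [lintegral_add_left (by fun_prop), lintegral_const_mul _ (by fun_prop),
    lintegral_add_left (by fun_prop),
    lintegral_prod_mul (f := fun x => a x * (1 - ∫⁻ y, f (x, y) ∂Q))
      (g := fun y => 1 - ∫⁻ x, f (x, y) ∂P) (by fun_prop) (by fun_prop),
    lintegral_prod_mul (f := fun x => 1 - ∫⁻ y, f (x, y) ∂Q)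
      (g := fun y => b y * (1 - ∫⁻ x, f (x, y) ∂P)) (by fun_prop) (by fun_prop),
    h.lintegral_missing_fst, h.lintegral_missing_snd, hM, mul_comm M, ← add_mul, mul_left_comm]
  gcongr
  exact mul_le_of_le_one_right' (ENNReal.inv_mul_le_one M)

end IsSubcouplingDensity

lemma ae_lintegral_eq_one_of_map_fst [SigmaFinite P] [SFinite Q] (hf : Measurable f)
    (h : ((P.prod Q).withDensity f).map Prod.fst = P) : ∀ᵐ x ∂P, ∫⁻ y, f (x, y) ∂Q = 1 := by
  refine (withDensity_eq_iff_of_sigmaFinite hf.lintegral_prod_right'.aemeasurable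
    (aemeasurable_const (b := 1))).1 ?_
  rw [← map_fst_withDensity_prod hf, h]
  exact withDensity_one.symm

lemma ae_lintegral_eq_one_of_map_snd [SFinite P] [SigmaFinite Q] (hf : Measurable f)
    (h : ((P.prod Q).withDensity f).map Prod.snd = Q) : ∀ᵐ y ∂Q, ∫⁻ x, f (x, y) ∂P = 1 := by
  refine (withDensity_eq_iff_of_sigmaFinite hf.lintegral_prod_left'.aemeasurable
    (aemeasurable_const (b := 1))).1 ?_
  rw [← map_snd_withDensity_prod hf, h]
  exact withDensity_one.symm

section Kernel

variable {A : Type*} [MeasurableSpace A] {κ : Kernel A X} {η : Kernel A Y}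

lemma measurable_lintegral_kernel_fst [IsSFiniteKernel η] (hf : Measurable f) :
    Measurable fun z : A × X => ∫⁻ y, f (z.2, y) ∂η z.1 :=
  Measurable.lintegral_kernel_prod_right' (κ := η.comap Prod.fst measurable_fst)
    (f := fun w : (A × X) × Y => f (w.1.2, w.2)) (by fun_prop)

lemma measurable_lintegral_kernel_snd [IsSFiniteKernel κ] (hf : Measurable f) :
    Measurable fun z : A × Y => ∫⁻ x, f (x, z.2) ∂κ z.1 :=
  Measurable.lintegral_kernel_prod_right' (κ := κ.comap Prod.fst measurable_fst)
    (f := fun w : (A × Y) × X => f (w.2, w.1.2)) (by fun_prop)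

lemma measurable_completedDensity_kernel [IsSFiniteKernel κ] [IsSFiniteKernel η]
    (hf : Measurable f) :
    Measurable (Function.uncurry fun a => completedDensity (κ a) (η a) f) := by
  have hfst := (measurable_lintegral_kernel_fst (η := η) hf).comp
    (by fun_prop : Measurable fun w : A × X × Y => (w.1, w.2.1))
  have hsnd := (measurable_lintegral_kernel_snd (κ := κ) hf).comp
    (by fun_prop : Measurable fun w : A × X × Y => (w.1, w.2.2))
  have hmass : Measurable fun a => ∫⁻ x, ∫⁻ y, f (x, y) ∂η a ∂κ a :=
    Measurable.lintegral_kernel_prod_right' (κ := κ) (measurable_lintegral_kernel_fst hf)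
  exact (hf.comp measurable_snd).add (((measurable_const.sub hmass).inv.comp measurable_fst).mul
    ((measurable_const.sub hfst).mul (measurable_const.sub hsnd)))

lemma measurableSet_isSubcouplingDensity [IsSFiniteKernel κ] [IsSFiniteKernel η]
    (hf : Measurable f) : MeasurableSet {a | IsSubcouplingDensity (κ a) (η a) f} := by
  have hset : {a | IsSubcouplingDensity (κ a) (η a) f} =
      {a | κ a {x | 1 < ∫⁻ y, f (x, y) ∂η a} = 0} ∩
        {a | η a {y | 1 < ∫⁻ x, f (x, y) ∂κ a} = 0} := by
    ext a
    exact ⟨fun h => ⟨by simpa [ae_iff] using h.fst_le, by simpa [ae_iff] using h.snd_le⟩,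
      fun h => ⟨hf, by simpa [ae_iff] using h.1, by simpa [ae_iff] using h.2⟩⟩
  rw [hset]
  exact (Kernel.measurable_kernel_prodMk_left (κ := κ) (measurableSet_lt measurable_const
      (measurable_lintegral_kernel_fst hf)) (measurableSet_singleton 0)).inter
    (Kernel.measurable_kernel_prodMk_left (κ := η) (measurableSet_lt measurable_const
      (measurable_lintegral_kernel_snd hf)) (measurableSet_singleton 0))

lemma exists_kernel_completedDensity (κ : Kernel A X) (η : Kernel A Y) [IsMarkovKernel κ]
    [IsMarkovKernel η] (hf : Measurable f) :
    ∃ G : Kernel A (X × Y), G.fst = κ ∧ G.snd = η ∧ ∀ a, IsSubcouplingDensity (κ a) (η a) f →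
      G a = ((κ a).prod (η a)).withDensity (completedDensity (κ a) (η a) f) := by
  classical
  let G := Kernel.piecewise (measurableSet_isSubcouplingDensity (κ := κ) (η := η) hf)
    ((κ ×ₖ η).withDensity fun a => completedDensity (κ a) (η a) f) (κ ×ₖ η)
  have hG (a : A) : G a = if IsSubcouplingDensity (κ a) (η a) f then
      ((κ a).prod (η a)).withDensity (completedDensity (κ a) (η a) f)
      else (κ a).prod (η a) := by
    simp only [G, Kernel.piecewise_apply, Set.mem_ofPred_eq, Kernel.prod_apply,
      Kernel.withDensity_apply _ (measurable_completedDensity_kernel hf)]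
  refine ⟨G, ?_, ?_, fun a h => (hG a).trans (if_pos h)⟩
  · ext1 a
    rw [Kernel.fst_apply, hG]
    split_ifs with h
    · exact h.map_fst_completedDensity
    · rw [← Measure.fst, Measure.fst_prod]
  · ext1 a
    rw [Kernel.snd_apply, hG]
    split_ifs with h
    · exact h.map_snd_completedDensity
    · rw [← Measure.snd, Measure.snd_prod]

end Kernel

lemma tendsto_lintegral_mul_one_sub {g : ℕ → X → ℝ≥0∞} (hg : ∀ n, Measurable (g n))
    (hlim : ∀ᵐ x ∂P, Tendsto (fun n => g n x) atTop (𝓝 1)) {a : X → ℝ≥0∞} (ha : Measurable a)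
    (hai : ∫⁻ x, a x ∂P ≠ ∞) :
    Tendsto (fun n => ∫⁻ x, a x * (1 - g n x) ∂P) atTop (𝓝 0) := by
  have hzero : ∫⁻ x, a x * 0 ∂P = 0 := by simp
  rw [← hzero]
  refine tendsto_lintegral_of_dominated_convergence a (fun n => by have := hg n; fun_prop)
    (fun n => .of_forall fun x => mul_le_of_le_one_right' tsub_le_self) hai ?_
  filter_upwards [hlim, ae_lt_top ha hai] with x hx hax
  refine ENNReal.Tendsto.const_mul ?_ (Or.inr hax.ne)
  simpa only [tsub_self] using
    ENNReal.Tendsto.sub tendsto_const_nhds hx (Or.inl ENNReal.one_ne_top)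

lemma ae_tendsto_lintegral_of_le {F : ℕ → X × Y → ℝ≥0∞} (hF : ∀ n, Measurable (F n))
    (hle : ∀ n z, F n z ≤ f z) (hlim : ∀ z, Tendsto (fun n => F n z) atTop (𝓝 (f z)))
    (hfst : ∀ᵐ x ∂P, ∫⁻ y, f (x, y) ∂Q = 1) :
    ∀ᵐ x ∂P, Tendsto (fun n => ∫⁻ y, F n (x, y) ∂Q) atTop (𝓝 1) := by
  filter_upwards [hfst] with x hx
  rw [← hx]
  exact tendsto_lintegral_of_dominated_convergence (fun y => f (x, y))
    (fun n => (hF n).comp measurable_prodMk_left) (fun n => .of_forall fun y => hle n (x, y))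
    (hx ▸ ENNReal.one_ne_top) (.of_forall fun y => hlim (x, y))

lemma exists_lintegral_completedDensity_le [IsProbabilityMeasure P] [IsProbabilityMeasure Q]
    {F : ℕ → X × Y → ℝ≥0∞} (hF : ∀ n, Measurable (F n)) (hle : ∀ n z, F n z ≤ f z)
    (hlim : ∀ z, Tendsto (fun n => F n z) atTop (𝓝 (f z)))
    (hfst : ∀ᵐ x ∂P, ∫⁻ y, f (x, y) ∂Q = 1) (hsnd : ∀ᵐ y ∂Q, ∫⁻ x, f (x, y) ∂P = 1)
    {c : X × Y → ℝ≥0∞} (hc : Measurable c) {a : X → ℝ≥0∞} (ha : Measurable a)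
    {b : Y → ℝ≥0∞} (hb : Measurable b) (hcab : ∀ z, c z ≤ a z.1 + b z.2)
    (hai : ∫⁻ x, a x ∂P ≠ ∞) (hbi : ∫⁻ y, b y ∂Q ≠ ∞) {ε : ℝ≥0∞} (hε : ε ≠ 0) :
    ∃ n, IsSubcouplingDensity P Q (F n) ∧
      ∫⁻ z, c z ∂((P.prod Q).withDensity (completedDensity P Q (F n))) ≤
        ∫⁻ z, f z * c z ∂(P.prod Q) + ε := by
  have hsub (n : ℕ) : IsSubcouplingDensity P Q (F n) :=
    ⟨hF n, hfst.mono fun x hx => (lintegral_mono fun y => hle n (x, y)).trans hx.le,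
      hsnd.mono fun y hy => (lintegral_mono fun x => hle n (x, y)).trans hy.le⟩
  have hremainder := (tendsto_lintegral_mul_one_sub (fun n => (hF n).lintegral_prod_right')
      (ae_tendsto_lintegral_of_le hF hle hlim hfst) ha hai).add
    (tendsto_lintegral_mul_one_sub (fun n => (hF n).lintegral_prod_left')
      (ae_tendsto_lintegral_of_le (fun n => (hF n).comp measurable_swap)
        (fun n z => hle n z.swap) (fun z => hlim z.swap) hsnd) hb hbi)
  rw [add_zero] at hremainder
  obtain ⟨n, hn⟩ := (hremainder.eventually_le_const (pos_iff_ne_zero.2 hε)).exists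
  refine ⟨n, hsub n, ((hsub n).lintegral_completedDensity_le hc ha hb hcab).trans ?_⟩
  exact add_le_add (lintegral_mono fun z => mul_le_mul_left (hle n z) (c z)) hn

end CouplingDensity

section Cells

open Filter Topology
open scoped NNReal

lemma exists_finsupp_nnrat_tendsto {ι : Type*} [Countable ι] (s : ι → ℝ≥0) :
    ∃ c : ℕ → ι →₀ ℚ≥0, (∀ N i, (c N i : ℝ≥0) ≤ s i) ∧
      ∀ i, Tendsto (fun N => (c N i : ℝ≥0)) atTop (𝓝 (s i)) := by
  classical
  obtain ⟨g, hg⟩ := exists_injective_nat ι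
  have hfin (N : ℕ) : {i | g i < N}.Finite := (Set.finite_Iio N).preimage hg.injOn
  let c (N : ℕ) : ι →₀ ℚ≥0 := Finsupp.onFinset (hfin N).toFinset
    (fun i => if g i < N then (⌊s i * (N + 1)⌋₊ : ℚ≥0) / (N + 1) else 0)
    fun i hi => by by_contra hN; simp_all
  have hc (N : ℕ) (i : ι) (hi : g i < N) : (c N i : ℝ≥0) = ⌊s i * (N + 1)⌋₊ / (N + 1) := by
    simp [c, hi]
  refine ⟨c, fun N i => ?_, fun i => ?_⟩
  · by_cases hi : g i < N
    · rw [hc N i hi, div_le_iff₀ (by positivity)]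
      exact Nat.floor_le zero_le
    · simp [c, hi]
  · have hfloor : Tendsto (fun N : ℕ => (⌊(s i : ℝ) * (N + 1 : ℕ)⌋₊ : ℝ) / (N + 1 : ℕ)) atTop
        (𝓝 (s i)) := (tendsto_nat_floor_mul_div_atTop (s i).coe_nonneg).comp
      (tendsto_natCast_atTop_atTop.comp (tendsto_add_atTop_nat 1))
    rw [← NNReal.tendsto_coe]
    refine hfloor.congr' ?_
    filter_upwards [eventually_gt_atTop (g i)] with N hN
    rw [hc N i hN]
    push_cast
    rfl

lemma exists_nnreal_withDensity_eq {X : Type*} [MeasurableSpace X] {μ ν : Measure X}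
    [SigmaFinite μ] [SigmaFinite ν] (h : ν ≪ μ) :
    ∃ s : X → ℝ≥0, Measurable s ∧ μ.withDensity (fun x => s x) = ν := by
  refine ⟨fun x => (ν.rnDeriv μ x).toNNReal, (ν.measurable_rnDeriv μ).ennreal_toNNReal, ?_⟩
  rw [withDensity_congr_ae (g := ν.rnDeriv μ)
    ((ν.rnDeriv_lt_top μ).mono fun x hx => ENNReal.coe_toNNReal hx.ne)]
  exact Measure.withDensity_rnDeriv_eq _ _ h

lemma absolutelyContinuous_fst_prod_snd {ι κ : Type*} [Countable ι] [Countable κ]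
    [MeasurableSpace ι] [MeasurableSpace κ] [MeasurableSingletonClass ι]
    [MeasurableSingletonClass κ] (γ : Measure (ι × κ)) [SFinite γ] : γ ≪ γ.fst.prod γ.snd := by
  intro s hs
  rw [measure_null_iff_singleton s.to_countable] at hs ⊢
  rintro ⟨i, j⟩ hij
  have hzero := hs (i, j) hij
  rw [← Set.singleton_prod_singleton, Measure.prod_prod, mul_eq_zero,
    Measure.fst_apply (measurableSet_singleton i),
    Measure.snd_apply (measurableSet_singleton j)] at hzero
  rcases hzero with h | h <;> exact measure_mono_null (by simp) h

lemma exists_cell_density {X Y ι κ : Type*} [MeasurableSpace X] [MeasurableSpace Y]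
    [Countable ι] [Countable κ] [MeasurableSpace ι] [MeasurableSpace κ]
    [MeasurableSingletonClass ι] [MeasurableSingletonClass κ] {i : X → ι} (hi : Measurable i)
    {j : Y → κ} (hj : Measurable j) (γ : Measure (X × Y)) [IsFiniteMeasure γ] :
    ∃ s : ι × κ → ℝ≥0, (∀ᵐ x ∂γ.fst, ∫⁻ y, s (i x, j y) ∂γ.snd = 1) ∧
      (∀ᵐ y ∂γ.snd, ∫⁻ x, s (i x, j y) ∂γ.fst = 1) ∧
      ∀ D : ι × κ → ℝ≥0∞, ∫⁻ z, s (i z.1, j z.2) * D (i z.1, j z.2) ∂(γ.fst.prod γ.snd) =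
        ∫⁻ z, D (i z.1, j z.2) ∂γ := by
  have hij : Measurable (Prod.map i j) := hi.prodMap hj
  have hfst : (γ.map (Prod.map i j)).fst = γ.fst.map i := by
    rw [Measure.fst, Measure.fst, Measure.map_map measurable_fst hij,
      Measure.map_map hi measurable_fst]
    rfl
  have hsnd : (γ.map (Prod.map i j)).snd = γ.snd.map j := by
    rw [Measure.snd, Measure.snd, Measure.map_map measurable_snd hij,
      Measure.map_map hj measurable_snd]
    rfl
  obtain ⟨s, hs, hsγ⟩ := exists_nnreal_withDensity_eq
    (absolutelyContinuous_fst_prod_snd (γ.map (Prod.map i j)))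
  have hmfst := ae_lintegral_eq_one_of_map_fst hs.coe_nnreal_ennreal (congrArg Measure.fst hsγ)
  have hmsnd := ae_lintegral_eq_one_of_map_snd hs.coe_nnreal_ennreal (congrArg Measure.snd hsγ)
  rw [hfst, hsnd] at hmfst hmsnd hsγ
  refine ⟨s, ?_, ?_, fun D => ?_⟩
  · filter_upwards [ae_of_ae_map hi.aemeasurable hmfst] with x hx
    rwa [lintegral_map (measurable_of_countable _) hj] at hx
  · filter_upwards [ae_of_ae_map hj.aemeasurable hmsnd] with y hy
    rwa [lintegral_map (measurable_of_countable _) hi] at hy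
  · have hD : Measurable D := measurable_of_countable D
    calc ∫⁻ z, s (i z.1, j z.2) * D (i z.1, j z.2) ∂(γ.fst.prod γ.snd)
        = ∫⁻ w, s w * D w ∂((γ.fst.map i).prod (γ.snd.map j)) := by
          rw [Measure.map_prod_map _ _ hi hj, lintegral_map (by fun_prop) hij]
          rfl
      _ = ∫⁻ w, D w ∂(γ.map (Prod.map i j)) := by
          rw [← hsγ, lintegral_withDensity_eq_lintegral_mul _ hs.coe_nnreal_ennreal hD]
          rfl
      _ = ∫⁻ z, D (i z.1, j z.2) ∂γ := lintegral_map hD hij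

/-- The function on `X × Y` which is constant on the cells `i⁻¹ k × j⁻¹ l`, with the values
prescribed by `c`. Rational values and finite supports leave only countably many of them. -/
def cellDensity {X Y ι κ : Type*} (i : X → ι) (j : Y → κ) (c : ι × κ →₀ ℚ≥0) (z : X × Y) :
    ℝ≥0∞ :=
  (c (i z.1, j z.2) : ℝ≥0)

lemma measurable_cellDensity {X Y ι κ : Type*} [MeasurableSpace X] [MeasurableSpace Y]
    [Countable ι] [Countable κ] [MeasurableSpace ι] [MeasurableSpace κ]
    [MeasurableSingletonClass ι] [MeasurableSingletonClass κ] {i : X → ι} (hi : Measurable i)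
    {j : Y → κ} (hj : Measurable j) (c : ι × κ →₀ ℚ≥0) : Measurable (cellDensity i j c) :=
  (measurable_of_countable fun k => ((c k : ℝ≥0) : ℝ≥0∞)).comp
    ((hi.comp measurable_fst).prodMk (hj.comp measurable_snd))

lemma exists_cellDensity_lintegral_le {X Y ι κ : Type*} [MeasurableSpace X] [MeasurableSpace Y]
    [Countable ι] [Countable κ] [MeasurableSpace ι] [MeasurableSpace κ]
    [MeasurableSingletonClass ι] [MeasurableSingletonClass κ] {i : X → ι} (hi : Measurable i)
    {j : Y → κ} (hj : Measurable j) (γ : Measure (X × Y)) [IsProbabilityMeasure γ]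
    {cost : X × Y → ℝ≥0∞} (hcost : Measurable cost) {a : X → ℝ≥0∞} (ha : Measurable a)
    {b : Y → ℝ≥0∞} (hb : Measurable b) (hab : ∀ z, cost z ≤ a z.1 + b z.2)
    (hai : ∫⁻ x, a x ∂γ.fst ≠ ∞) (hbi : ∫⁻ y, b y ∂γ.snd ≠ ∞) {D : ι × κ → ℝ≥0∞}
    (hD : ∀ z, cost z ≤ D (i z.1, j z.2)) {ε : ℝ≥0∞} (hε : ε ≠ 0) :
    ∃ c, IsSubcouplingDensity γ.fst γ.snd (cellDensity i j c) ∧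
      ∫⁻ z, cost z ∂((γ.fst.prod γ.snd).withDensity
        (completedDensity γ.fst γ.snd (cellDensity i j c))) ≤
          ∫⁻ z, D (i z.1, j z.2) ∂γ + ε := by
  obtain ⟨s, hfst, hsnd, hs⟩ := exists_cell_density hi hj γ
  obtain ⟨c, hcs, hclim⟩ := exists_finsupp_nnrat_tendsto s
  obtain ⟨N, hsub, hN⟩ := exists_lintegral_completedDensity_le
    (F := fun N => cellDensity i j (c N)) (f := fun z => s (i z.1, j z.2))
    (fun N => measurable_cellDensity hi hj (c N))
    (fun N z => ENNReal.coe_le_coe.2 (hcs N _)) (fun z => ENNReal.tendsto_coe.2 (hclim _))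
    hfst hsnd hcost ha hb hab hai hbi hε
  refine ⟨c N, hsub, hN.trans ?_⟩
  rw [← hs D]
  gcongr with z
  exact hD z

lemma exists_measurable_edist_le {S : Type*} [PseudoEMetricSpace S] [MeasurableSpace S]
    [OpensMeasurableSpace S] [TopologicalSpace.SeparableSpace S] [Nonempty S] {ε : ℝ≥0∞}
    (hε : ε ≠ 0) :
    ∃ i : S → ℕ, Measurable i ∧ ∀ x, edist x (TopologicalSpace.denseSeq S (i x)) ≤ ε := by
  classical
  have hcover (x : S) : ∃ k, edist x (TopologicalSpace.denseSeq S k) < ε :=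
    (TopologicalSpace.denseRange_denseSeq S).exists_mem_open
      (Metric.isOpen_eball (x := x) (ε := ε)) ⟨x, Metric.mem_eball_self (pos_iff_ne_zero.2 hε)⟩
      |>.imp fun k hk => by rwa [Metric.mem_eball, edist_comm] at hk
  refine ⟨fun x => Nat.find (hcover x), measurable_find _ fun k => ?_,
    fun x => (Nat.find_spec (hcover x)).le⟩
  exact measurableSet_lt measurable_edist_left measurable_const

end Cells

section Wasserstein

open Filter Topology
open scoped NNReal

lemma ofReal_integral_le_lintegral {X : Type*} [MeasurableSpace X] {μ : Measure X} {f : X → ℝ}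
    (hf : ∀ x, 0 ≤ f x) : ENNReal.ofReal (∫ x, f x ∂μ) ≤ ∫⁻ x, ENNReal.ofReal (f x) ∂μ := by
  by_cases h : Integrable f μ
  · exact (ofReal_integral_eq_lintegral_ofReal h (.of_forall hf)).le
  · simp [integral_undef h]

section Cost

variable {X : Type*} [MeasurableSpace X] {c : X → X → ℝ} {p : ℝ} {μ ν : Measure X}

lemma integral_rpow_rpow_nonneg (hc : ∀ x y, 0 ≤ c x y) (γ : Measure (X × X)) :
    0 ≤ (∫ z, c z.1 z.2 ^ p ∂γ) ^ (1 / p) :=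
  Real.rpow_nonneg (integral_nonneg fun _ => Real.rpow_nonneg (hc _ _) _) _

lemma wassW_nonneg (hc : ∀ x y, 0 ≤ c x y) : 0 ≤ wassW c p μ ν := by
  refine Real.sInf_nonneg ?_
  rintro r ⟨γ, -, -, rfl⟩
  exact integral_rpow_rpow_nonneg hc γ

lemma ofReal_wassW_rpow_le (hc : ∀ x y, 0 ≤ c x y) (hp : 0 < p) {γ : Measure (X × X)}
    (hfst : γ.fst = μ) (hsnd : γ.snd = ν) :
    ENNReal.ofReal (wassW c p μ ν) ^ p ≤ ∫⁻ z, ENNReal.ofReal (c z.1 z.2) ^ p ∂γ := by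
  have hint : 0 ≤ ∫ z, c z.1 z.2 ^ p ∂γ := integral_nonneg fun _ => Real.rpow_nonneg (hc _ _) _
  have hle : wassW c p μ ν ≤ (∫ z, c z.1 z.2 ^ p ∂γ) ^ (1 / p) := by
    refine csInf_le ⟨0, ?_⟩ ⟨γ, hfst, hsnd, rfl⟩
    rintro r ⟨γ', -, -, rfl⟩
    exact integral_rpow_rpow_nonneg hc γ'
  calc ENNReal.ofReal (wassW c p μ ν) ^ p
      = ENNReal.ofReal (wassW c p μ ν ^ p) :=
        ENNReal.ofReal_rpow_of_nonneg (wassW_nonneg hc) hp.le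
    _ ≤ ENNReal.ofReal (∫ z, c z.1 z.2 ^ p ∂γ) := by
        refine ENNReal.ofReal_le_ofReal
          ((Real.rpow_le_rpow (wassW_nonneg hc) hle hp.le).trans_eq ?_)
        rw [← Real.rpow_mul hint, one_div_mul_cancel hp.ne', Real.rpow_one]
    _ ≤ ∫⁻ z, ENNReal.ofReal (c z.1 z.2 ^ p) ∂γ :=
        ofReal_integral_le_lintegral fun _ => Real.rpow_nonneg (hc _ _) _
    _ = ∫⁻ z, ENNReal.ofReal (c z.1 z.2) ^ p ∂γ :=
        lintegral_congr fun _ => (ENNReal.ofReal_rpow_of_nonneg (hc _ _) hp.le).symm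

end Cost

variable {S : Type*} [MetricSpace S] {p : ℝ}

lemma edist_rpow_le_add (hp : 1 ≤ p) (x y x₀ : S) :
    edist x y ^ p ≤ 2 ^ (p - 1) * edist x x₀ ^ p + 2 ^ (p - 1) * edist y x₀ ^ p := by
  rw [← mul_add, edist_comm y x₀]
  exact (ENNReal.rpow_le_rpow (edist_triangle x x₀ y) (by linarith)).trans
    (ENNReal.rpow_add_le_mul_rpow_add_rpow _ _ hp)

lemma two_rpow_sub_one_ne_top (hp : 1 ≤ p) : (2 : ℝ≥0∞) ^ (p - 1) ≠ ∞ :=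
  ENNReal.rpow_ne_top_of_nonneg (by linarith) ENNReal.ofNat_ne_top

variable [MeasurableSpace S] {μ ν : Measure S}

lemma MemWp.lintegral_edist_rpow_ne_top (hp : 1 ≤ p) (hμ : MemWp p μ) (x₀ : S) :
    ∫⁻ x, 2 ^ (p - 1) * edist x x₀ ^ p ∂μ ≠ ∞ := by
  have hp0 : 0 ≤ p := by linarith
  obtain ⟨hprob, x₁, hx₁⟩ := hμ
  have hmoment : ∫⁻ x, edist x x₁ ^ p ∂μ ≠ ∞ := by
    simpa only [edist_dist, ENNReal.ofReal_rpow_of_nonneg dist_nonneg hp0] using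
      hx₁.lintegral_lt_top.ne
  have hconst : (2 : ℝ≥0∞) ^ (p - 1) * edist x₀ x₁ ^ p ≠ ∞ :=
    ENNReal.mul_ne_top (two_rpow_sub_one_ne_top hp)
      (ENNReal.rpow_ne_top_of_nonneg hp0 (edist_ne_top _ _))
  rw [lintegral_const_mul' _ _ (two_rpow_sub_one_ne_top hp)]
  refine ENNReal.mul_ne_top (two_rpow_sub_one_ne_top hp)
    (ne_top_of_le_ne_top ?_ (lintegral_mono fun x => edist_rpow_le_add hp x x₀ x₁))
  rw [lintegral_add_right _ measurable_const,
    lintegral_const_mul' _ _ (two_rpow_sub_one_ne_top hp), lintegral_const, measure_univ, mul_one]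
  exact ENNReal.add_ne_top.2 ⟨ENNReal.mul_ne_top (two_rpow_sub_one_ne_top hp) hmoment, hconst⟩

variable [BorelSpace S]

lemma MemWp.lintegral_coupling_ne_top (hp : 1 ≤ p) (hμ : MemWp p μ) (hν : MemWp p ν)
    {γ : Measure (S × S)} (hfst : γ.fst = μ) (hsnd : γ.snd = ν) :
    ∫⁻ z, edist z.1 z.2 ^ p ∂γ ≠ ∞ := by
  obtain ⟨x₀, -⟩ := hμ.2
  have hμ₀ := hμ.lintegral_edist_rpow_ne_top hp x₀
  have hν₀ := hν.lintegral_edist_rpow_ne_top hp x₀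
  rw [← hfst, Measure.fst, lintegral_map (by fun_prop) measurable_fst] at hμ₀
  rw [← hsnd, Measure.snd, lintegral_map (by fun_prop) measurable_snd] at hν₀
  refine ne_top_of_le_ne_top ?_ (lintegral_mono fun z => edist_rpow_le_add hp z.1 z.2 x₀)
  rw [lintegral_add_left (by fun_prop)]
  exact ENNReal.add_ne_top.2 ⟨hμ₀, hν₀⟩

variable [SecondCountableTopology S]

lemma le_ofReal_wassW_rpow (hp : 1 ≤ p) (hμ : MemWp p μ) (hν : MemWp p ν) {c : ℝ≥0∞}
    (h : ∀ γ : Measure (S × S), γ.fst = μ → γ.snd = ν → c ≤ ∫⁻ z, edist z.1 z.2 ^ p ∂γ) :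
    c ≤ ENNReal.ofReal (wassW (fun u v => dist u v) p μ ν) ^ p := by
  have hp0 : 0 < p := by linarith
  have := hμ.1
  have := hν.1
  have hc : c ≠ ∞ := ne_top_of_le_ne_top
    (hμ.lintegral_coupling_ne_top hp hν Measure.fst_prod Measure.snd_prod)
    (h (μ.prod ν) Measure.fst_prod Measure.snd_prod)
  have hle : (c.toReal) ^ (1 / p) ≤ wassW (fun u v => dist u v) p μ ν := by
    refine le_csInf ⟨_, μ.prod ν, Measure.fst_prod, Measure.snd_prod, rfl⟩ ?_
    rintro r ⟨γ, hfst, hsnd, rfl⟩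
    have hcost : ∫ z, dist z.1 z.2 ^ p ∂γ = (∫⁻ z, edist z.1 z.2 ^ p ∂γ).toReal := by
      rw [integral_eq_lintegral_of_nonneg_ae (.of_forall fun z => by positivity)
        (by fun_prop (disch := positivity))]
      simp only [edist_dist, ENNReal.ofReal_rpow_of_nonneg dist_nonneg hp0.le]
    rw [hcost]
    gcongr
    exacts [hμ.lintegral_coupling_ne_top hp hν hfst hsnd, h γ hfst hsnd]
  rw [← ENNReal.ofReal_toReal hc, ENNReal.ofReal_rpow_of_nonneg
    (wassW_nonneg fun _ _ => dist_nonneg) hp0.le]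
  refine ENNReal.ofReal_le_ofReal ?_
  rwa [one_div, Real.rpow_inv_le_iff_of_pos ENNReal.toReal_nonneg
    (wassW_nonneg fun _ _ => dist_nonneg) hp0] at hle

lemma tendsto_lintegral_add_rpow (hp : 1 ≤ p) {X : Type*} [MeasurableSpace X] {γ : Measure X}
    [IsFiniteMeasure γ] {f : X → ℝ≥0∞} (hf : Measurable f) (hfp : ∫⁻ x, f x ^ p ∂γ ≠ ∞)
    {u : ℕ → ℝ≥0∞} {C : ℝ≥0∞} (hC : C ≠ ∞) (huC : ∀ n, u n ≤ C) (hu : Tendsto u atTop (𝓝 0)) :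
    Tendsto (fun n => ∫⁻ x, (f x + u n) ^ p ∂γ) atTop (𝓝 (∫⁻ x, f x ^ p ∂γ)) := by
  have hp0 : 0 ≤ p := by linarith
  refine tendsto_lintegral_of_dominated_convergence (fun x => (f x + C) ^ p)
    (fun n => (hf.add_const _).pow_const p) (fun n => .of_forall fun x => ?_) ?_
    (.of_forall fun x => ?_)
  · exact ENNReal.rpow_le_rpow (add_le_add le_rfl (huC n)) hp0
  · refine ne_top_of_le_ne_top ?_ (lintegral_mono fun x =>
      ENNReal.rpow_add_le_mul_rpow_add_rpow (f x) C hp)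
    rw [lintegral_const_mul' _ _ (two_rpow_sub_one_ne_top hp),
      lintegral_add_right _ measurable_const, lintegral_const]
    exact ENNReal.mul_ne_top (two_rpow_sub_one_ne_top hp) (ENNReal.add_ne_top.2 ⟨hfp,
      ENNReal.mul_ne_top (ENNReal.rpow_ne_top_of_nonneg hp0 hC) (measure_ne_top γ _)⟩)
  · have hlim := (ENNReal.continuous_rpow_const (y := p)).tendsto (f x + 0) |>.comp
      (hu.const_add (f x))
    rwa [add_zero] at hlim

lemma MemWp.exists_cellDensity_lintegral_edist_le (hp : 1 ≤ p) (hμ : MemWp p μ)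
    (hν : MemWp p ν) {γ : Measure (S × S)} (hfst : γ.fst = μ) (hsnd : γ.snd = ν) {i : S → ℕ}
    (hi : Measurable i) {x : ℕ → S} {e : ℝ≥0∞} (hx : ∀ y, edist y (x (i y)) ≤ e) {ε : ℝ≥0∞}
    (hε : ε ≠ 0) :
    ∃ c, IsSubcouplingDensity μ ν (cellDensity i i c) ∧
      ∫⁻ z, edist z.1 z.2 ^ p ∂((μ.prod ν).withDensity
        (completedDensity μ ν (cellDensity i i c))) ≤
          ∫⁻ z, (edist z.1 z.2 + 4 * e) ^ p ∂γ + ε := by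
  have hp0 : 0 ≤ p := by linarith
  have hprob : IsProbabilityMeasure γ :=
    ⟨by rw [← Measure.fst_univ, hfst]; exact hμ.1.measure_univ⟩
  obtain ⟨x₀, -⟩ := hμ.2
  have hcell (y z : S) : edist y z ≤ edist (x (i y)) (x (i z)) + 2 * e := by
    calc edist y z ≤ edist y (x (i y)) + edist (x (i y)) (x (i z)) + edist (x (i z)) z :=
          edist_triangle4 _ _ _ _
      _ ≤ e + edist (x (i y)) (x (i z)) + e := by
          gcongr
          exacts [hx y, edist_comm z _ ▸ hx z]
      _ = edist (x (i y)) (x (i z)) + 2 * e := by ring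
  have hcentre (y z : S) : edist (x (i y)) (x (i z)) + 2 * e ≤ edist y z + 4 * e := by
    calc edist (x (i y)) (x (i z)) + 2 * e
        ≤ edist (x (i y)) y + edist y z + edist z (x (i z)) + 2 * e := by
          gcongr
          exact edist_triangle4 _ _ _ _
      _ ≤ e + edist y z + e + 2 * e := by
          gcongr
          exacts [edist_comm y _ ▸ hx y, hx z]
      _ = edist y z + 4 * e := by ring
  subst hfst hsnd
  obtain ⟨c, hsub, hc⟩ := exists_cellDensity_lintegral_le hi hi γ
    (cost := fun z => edist z.1 z.2 ^ p) (D := fun k => (edist (x k.1) (x k.2) + 2 * e) ^ p)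
    (by fun_prop) (by fun_prop) (by fun_prop) (fun z => edist_rpow_le_add hp z.1 z.2 x₀)
    (hμ.lintegral_edist_rpow_ne_top hp x₀) (hν.lintegral_edist_rpow_ne_top hp x₀)
    (fun z => ENNReal.rpow_le_rpow (hcell z.1 z.2) hp0) hε
  refine ⟨c, hsub, hc.trans ?_⟩
  exact add_le_add (lintegral_mono fun z => ENNReal.rpow_le_rpow (hcentre z.1 z.2) hp0) le_rfl

section Kernel

variable {A : Type*} [MeasurableSpace A] [Nonempty S] (κ η : Kernel A S) [IsMarkovKernel κ]
  [IsMarkovKernel η]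

/- The couplings in the family are completions of cellwise constant rational subcouplings, on
finer and finer cells; since neither the cells nor the rational values depend on the parameter,
countably many kernels suffice. -/
lemma exists_seq_kernel_coupling :
    ∃ G : ℕ → Kernel A (S × S), (∀ k, (G k).fst = κ) ∧ (∀ k, (G k).snd = η) ∧
      ∀ p : ℝ, 1 ≤ p → ∀ a, MemWp p (κ a) → MemWp p (η a) → ∀ γ : Measure (S × S),
        γ.fst = κ a → γ.snd = η a →
          ⨅ k, ∫⁻ z, edist z.1 z.2 ^ p ∂G k a ≤ ∫⁻ z, edist z.1 z.2 ^ p ∂γ := by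
  have hmesh (l : ℕ) : ((l : ℝ≥0∞) + 1)⁻¹ ≠ 0 := by simp
  choose i hi hix using fun l => exists_measurable_edist_le (S := S) (hmesh l)
  choose G hfst hsnd hG using fun k : ℕ × (ℕ × ℕ →₀ ℚ≥0) => exists_kernel_completedDensity κ η
    (measurable_cellDensity (hi k.1) (hi k.1) k.2)
  obtain ⟨e, he⟩ := exists_surjective_nat (ℕ × (ℕ × ℕ →₀ ℚ≥0))
  refine ⟨G ∘ e, fun k => hfst _, fun k => hsnd _, fun p hp a hκ hη γ hγfst hγsnd => ?_⟩
  have hγ : IsProbabilityMeasure γ :=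
    ⟨by rw [← Measure.fst_univ, hγfst]; exact hκ.1.measure_univ⟩
  have hlevel (l : ℕ) : ⨅ k, ∫⁻ z, edist z.1 z.2 ^ p ∂G (e k) a ≤
      ∫⁻ z, (edist z.1 z.2 + 4 * ((l : ℝ≥0∞) + 1)⁻¹) ^ p ∂γ := by
    refine ENNReal.le_of_forall_pos_le_add fun ε hε _ => ?_
    obtain ⟨c, hsub, hc⟩ := hκ.exists_cellDensity_lintegral_edist_le hp hη hγfst hγsnd (hi l)
      (hix l) (ε := ε) (ENNReal.coe_ne_zero.2 hε.ne')
    obtain ⟨k, hk⟩ := he (l, c)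
    refine (iInf_le _ k).trans ?_
    rwa [hk, hG (l, c) a hsub]
  have hinv : Tendsto (fun l : ℕ => 4 * ((l : ℝ≥0∞) + 1)⁻¹) atTop (𝓝 0) := by
    simpa using ENNReal.Tendsto.const_mul (a := 4)
      ((tendsto_add_atTop_iff_nat 1).2 ENNReal.tendsto_inv_nat_nhds_zero) (Or.inr (by simp))
  exact ge_of_tendsto' (tendsto_lintegral_add_rpow hp (by fun_prop)
    (hκ.lintegral_coupling_ne_top hp hη hγfst hγsnd) (C := 4) (by simp)
    (fun l => mul_le_of_le_one_right' (ENNReal.inv_le_one.2 (by simp))) hinv) hlevel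

variable {κ η} (hp : 1 ≤ p) (hκ : ∀ a, MemWp p (κ a)) (hη : ∀ a, MemWp p (η a))
include hp hκ hη

lemma exists_seq_kernel_coupling_iInf_eq :
    ∃ G : ℕ → Kernel A (S × S), (∀ k, (G k).fst = κ) ∧ (∀ k, (G k).snd = η) ∧
      ∀ a, ENNReal.ofReal (wassW (fun u v => dist u v) p (κ a) (η a)) ^ p =
        ⨅ k, ∫⁻ z, edist z.1 z.2 ^ p ∂G k a := by
  obtain ⟨G, hfst, hsnd, hG⟩ := exists_seq_kernel_coupling κ η
  refine ⟨G, hfst, hsnd, fun a => le_antisymm (le_iInf fun k => ?_)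
    (le_ofReal_wassW_rpow hp (hκ a) (hη a) (hG p hp a (hκ a) (hη a)))⟩
  simpa only [edist_dist] using ofReal_wassW_rpow_le (fun _ _ => dist_nonneg) (by linarith)
    (by rw [← hfst k, Kernel.fst_apply, Measure.fst])
    (by rw [← hsnd k, Kernel.snd_apply, Measure.snd])

lemma measurable_ofReal_wassW_kernel :
    Measurable fun a => ENNReal.ofReal (wassW (fun u v => dist u v) p (κ a) (η a)) := by
  obtain ⟨G, -, -, hG⟩ := exists_seq_kernel_coupling_iInf_eq hp hκ hη
  have hroot (a : A) : ENNReal.ofReal (wassW (fun u v => dist u v) p (κ a) (η a)) =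
      (⨅ k, ∫⁻ z, edist z.1 z.2 ^ p ∂G k a) ^ p⁻¹ := by
    rw [← hG, ENNReal.rpow_rpow_inv (by linarith)]
  simp only [hroot]
  exact (Measurable.iInf fun k => Measurable.lintegral_kernel (by fun_prop)).pow_const _

lemma exists_kernel_coupling {δ : ℝ≥0∞} (hδ : δ ≠ 0) :
    ∃ G : Kernel A (S × S), G.fst = κ ∧ G.snd = η ∧ ∀ a, ∫⁻ z, edist z.1 z.2 ^ p ∂G a ≤
      ENNReal.ofReal (wassW (fun u v => dist u v) p (κ a) (η a)) ^ p + δ := by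
  classical
  obtain ⟨G, hfst, hsnd, hG⟩ := exists_seq_kernel_coupling_iInf_eq hp hκ hη
  have hcost (k : ℕ) : Measurable fun a => ∫⁻ z, edist z.1 z.2 ^ p ∂G k a :=
    Measurable.lintegral_kernel (by fun_prop)
  have hex (a : A) : ∃ k, ∫⁻ z, edist z.1 z.2 ^ p ∂G k a ≤
      (⨅ k, ∫⁻ z, edist z.1 z.2 ^ p ∂G k a) + δ := by
    have hfin : ⨅ k, ∫⁻ z, edist z.1 z.2 ^ p ∂G k a ≠ ∞ := by
      rw [← hG]
      exact ENNReal.rpow_ne_top_of_nonneg (by linarith) ENNReal.ofReal_ne_top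
    obtain ⟨k, hk⟩ := iInf_lt_iff.1 (ENNReal.lt_add_right hfin hδ)
    exact ⟨k, hk.le⟩
  refine ⟨⟨fun a => G (Nat.find (hex a)) a, ?_⟩, ?_, ?_, fun a => ?_⟩
  · exact Measurable.find (fun k => (G k).measurable)
      (fun k => measurableSet_le (hcost k) ((Measurable.iInf hcost).add_const δ)) hex
  · ext1 a
    rw [Kernel.fst_apply, ← hfst (Nat.find (hex a)), Kernel.fst_apply]
    rfl
  · ext1 a
    rw [Kernel.snd_apply, ← hsnd (Nat.find (hex a)), Kernel.snd_apply]
    rfl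
  · rw [hG]
    exact Nat.find_spec (hex a)

end Kernel

end Wasserstein

section CondIndep

variable {Ω T E F : Type*} {mΩ : MeasurableSpace Ω} {mT : MeasurableSpace T}
  {mE : MeasurableSpace E} {mF : MeasurableSpace F} {P : Measure Ω} [IsFiniteMeasure P]
  {θ : Ω → T} {X : Ω → E} {Y : Ω → F} {κ : Kernel T Ω} [IsFiniteKernel κ] {Q : Kernel E Ω}
  [IsFiniteKernel Q]

-- Both sides are computed by conditioning on `θ`, given which `X` and `Y` are independent.
lemma hasCondDistrib_comp_of_indepFun (hθ : Measurable θ) (hX : Measurable X) (hY : Measurable Y)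
    (hκ : HasCondDistrib id θ κ P) (hQ : HasCondDistrib id X Q P)
    (hind : ∀ t, IndepFun X Y (κ t)) :
    HasCondDistrib Y X ((κ.map Y).comap θ hθ ∘ₖ Q) P := by
  refine hasCondDistrib_of_setLIntegral hX hY.aemeasurable fun A hA B hB => ?_
  have hA' := hX hA
  have hB' := hY hB
  have hκB : Measurable fun t => κ t (Y ⁻¹' B) := κ.measurable_coe hB'
  have h_inter := lintegral_of_hasCondDistrib hκ
    (f := fun z => (X ⁻¹' A ∩ Y ⁻¹' B).indicator 1 z.2)
    ((measurable_one.indicator (hA'.inter hB')).comp measurable_snd)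
  have h_mul := lintegral_of_hasCondDistrib hκ
    (f := fun z => (X ⁻¹' A).indicator 1 z.2 * κ z.1 (Y ⁻¹' B))
    (((measurable_one.indicator hA').comp measurable_snd).mul (hκB.comp measurable_fst))
  have h_indep (t : T) : κ t (X ⁻¹' A ∩ Y ⁻¹' B) = κ t (X ⁻¹' A) * κ t (Y ⁻¹' B) :=
    (hind t).measure_inter_preimage_eq_mul A B hA hB
  calc P (X ⁻¹' A ∩ Y ⁻¹' B)
      = ∫⁻ ω, κ (θ ω) (X ⁻¹' A ∩ Y ⁻¹' B) ∂P := by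
        simpa only [id, lintegral_indicator_one (hA'.inter hB')] using h_inter
    _ = ∫⁻ ω, κ (θ ω) (X ⁻¹' A) * κ (θ ω) (Y ⁻¹' B) ∂P := lintegral_congr fun ω => h_indep _
    _ = ∫⁻ ω, (X ⁻¹' A).indicator 1 ω * κ (θ ω) (Y ⁻¹' B) ∂P := by
        simpa only [id, lintegral_mul_const _ (measurable_one.indicator hA'),
          lintegral_indicator_one hA'] using h_mul.symm
    _ = ∫⁻ ω in X ⁻¹' A, κ (θ ω) (Y ⁻¹' B) ∂P := by
        rw [← lintegral_indicator hA']
        refine lintegral_congr fun ω => ?_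
        by_cases hω : ω ∈ X ⁻¹' A <;> simp [hω]
    _ = ∫⁻ ω in X ⁻¹' A, ∫⁻ ω', κ (θ ω') (Y ⁻¹' B) ∂Q (X ω) ∂P :=
        (setLIntegral_of_hasCondDistrib_id hX hQ (hκB.comp hθ) hA).symm
    _ = ∫⁻ ω in X ⁻¹' A, ((κ.map Y).comap θ hθ ∘ₖ Q) (X ω) B ∂P := by
        simp only [Kernel.comp_apply' _ _ _ hB, Kernel.comap_apply, Kernel.map_apply' _ hY _ hB]

end CondIndep

section IIDKernel

variable {A X Y : Type*} [MeasurableSpace A] [MeasurableSpace X] [MeasurableSpace Y]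

lemma measurable_infinitePi_kernel (κ : Kernel A X) [IsMarkovKernel κ] :
    Measurable fun a => Measure.infinitePi fun _ : ℕ => κ a := by
  refine Measurable.measure_of_isPiSystem_of_isProbabilityMeasure
    generateFrom_squareCylinders.symm
    (isPiSystem_squareCylinders (fun _ => MeasurableSpace.isPiSystem_measurableSet) (by simp)) ?_
  rintro _ ⟨I, t, ht, rfl⟩
  have ht' (i : ℕ) : MeasurableSet (t i) := ht i trivial
  simp_rw [Measure.infinitePi_pi _ fun i _ => ht' i]
  exact Finset.measurable_prod _ fun i _ => κ.measurable_coe (ht' i)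

/-- The kernel sending a parameter `a` to the law of an i.i.d. sequence with marginal `κ a`. -/
def iidKernel (κ : Kernel A X) [IsMarkovKernel κ] : Kernel A (ℕ → X) :=
  ⟨fun a => Measure.infinitePi fun _ => κ a, measurable_infinitePi_kernel κ⟩

instance (κ : Kernel A X) [IsMarkovKernel κ] : IsMarkovKernel (iidKernel κ) :=
  ⟨fun a => inferInstanceAs (IsProbabilityMeasure (Measure.infinitePi fun _ => κ a))⟩

lemma iidKernel_map {κ : Kernel A X} [IsMarkovKernel κ] {η : Kernel A Y} [IsMarkovKernel η]
    {f : X → Y} (hf : Measurable f) (h : κ.map f = η) :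
    (iidKernel κ).map (f ∘ ·) = iidKernel η := by
  ext1 a
  rw [Kernel.map_apply _ (by fun_prop)]
  refine (Measure.infinitePi_map_pi (μ := fun _ => κ a) (f := fun _ => f) fun _ => hf).trans ?_
  simp only [← Kernel.map_apply _ hf, h]
  rfl

lemma eq_infinitePi_of_forall_fin {μ : Measure X} [IsProbabilityMeasure μ] {ν : Measure (ℕ → X)}
    (h : ∀ (n : ℕ) (s : Fin n → Set X), (∀ i, MeasurableSet (s i)) →
      ν {ω | ∀ i : Fin n, ω i ∈ s i} = ∏ i, μ (s i)) :
    ν = Measure.infinitePi fun _ => μ := by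
  refine Measure.eq_infinitePi _ fun I t ht => ?_
  obtain ⟨n, hn⟩ := I.exists_nat_subset_range
  have hset : (I : Set ℕ).pi t = {ω | ∀ i : Fin n, ω i ∈ if (i : ℕ) ∈ I then t i else .univ} := by
    ext ω
    refine ⟨fun hω i => ?_, fun hω i hi => ?_⟩
    · split_ifs with hi
      exacts [hω i hi, trivial]
    · simpa [Finset.mem_coe.1 hi] using hω ⟨i, Finset.mem_range.1 (hn hi)⟩
  rw [hset, h n (fun i => if (i : ℕ) ∈ I then t i else .univ)
      fun i => by split_ifs; exacts [ht _, .univ],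
    Fin.prod_univ_eq_prod_range (fun i => μ (if i ∈ I then t i else .univ)),
    ← Finset.prod_subset hn fun i _ hi => by simp [hi]]
  exact Finset.prod_congr rfl fun i hi => by rw [if_pos hi]

end IIDKernel

section InitialSegment

variable {X : Type*} [MeasurableSpace X]

/-- The first `n` coordinates of a sequence, i.e. the observations `ξ^(n)`. -/
def initialSegment (n : ℕ) (ω : ℕ → X) : Fin n → X := fun i => ω i

lemma measurable_initialSegment (n : ℕ) : Measurable (initialSegment (X := X) n) :=
  measurable_pi_lambda _ fun _ => measurable_pi_apply _

lemma monotone_comap_initialSegment :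
    Monotone fun n => MeasurableSpace.comap (initialSegment (X := X) n) inferInstance := by
  intro k n hkn
  have hrestrict : initialSegment (X := X) k =
      (fun v i => v (i.castLE hkn)) ∘ initialSegment n := rfl
  dsimp only
  rw [hrestrict, ← MeasurableSpace.comap_comp]
  exact MeasurableSpace.comap_mono
    (measurable_pi_lambda _ fun _ => measurable_pi_apply _).comap_le

lemma iSup_comap_initialSegment_add_one :
    ⨆ n, MeasurableSpace.comap (initialSegment (X := X) (n + 1)) inferInstance =
      MeasurableSpace.pi := by
  refine le_antisymm (iSup_le fun n => (measurable_initialSegment _).comap_le)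
    (iSup_mono fun n => ?_)
  have heval : (fun ω : ℕ → X => ω n) = (fun v => v (Fin.last n)) ∘ initialSegment (n + 1) := rfl
  rw [heval, ← MeasurableSpace.comap_comp]
  exact MeasurableSpace.comap_mono (measurable_pi_apply _).comap_le

end InitialSegment

section EmpiricalMeasure

variable {A X Y : Type*} [MeasurableSpace A] [MeasurableSpace X] [MeasurableSpace Y]

lemma measurable_sum_smul_dirac {ι : Type*} (c : ℝ≥0∞) (s : Finset ι) :
    Measurable fun x : ι → X => c • ∑ i ∈ s, Measure.dirac (x i) := by
  refine Measure.measurable_of_measurable_coe _ fun B hB => ?_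
  simp only [Measure.smul_apply, Measure.finsetSum_apply, smul_eq_mul]
  exact (Finset.measurable_sum _ fun i _ => (Measure.measurable_coe hB).comp
    (Measure.measurable_dirac.comp (measurable_pi_apply i))).const_mul _

lemma measurable_empShift (n m : ℕ) : Measurable (empShift (S := X) n m) :=
  (measurable_sum_smul_dirac _ (Finset.range m)).comp
    (measurable_pi_lambda _ fun i => measurable_pi_apply (i + n))

lemma isProbabilityMeasure_empShift (n : ℕ) {m : ℕ} (hm : 1 ≤ m) (ω : ℕ → X) :
    IsProbabilityMeasure (empShift n m ω) := by
  refine ⟨?_⟩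
  simp only [empShift, Measure.smul_apply, Measure.finsetSum_apply, smul_eq_mul, measure_univ,
    Finset.sum_const, Finset.card_range, nsmul_eq_mul, mul_one]
  exact ENNReal.inv_mul_cancel (by simpa using (by omega : m ≠ 0)) (ENNReal.natCast_ne_top m)

lemma empShift_map {f : X → Y} (hf : Measurable f) (n m : ℕ) (ω : ℕ → X) :
    (empShift n m ω).map f = empShift n m (f ∘ ω) := by
  simp only [empShift, Measure.map_smul, Measure.map_finset_sum hf.aemeasurable,
    Measure.map_dirac' hf, Function.comp]

lemma lintegral_empShift_infinitePi (μ : Measure X) [IsProbabilityMeasure μ] (n : ℕ) {m : ℕ}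
    (hm : 1 ≤ m) {f : X → ℝ≥0∞} (hf : Measurable f) :
    ∫⁻ ω, ∫⁻ x, f x ∂empShift n m ω ∂(Measure.infinitePi fun _ => μ) = ∫⁻ x, f x ∂μ := by
  have hcoord (j : ℕ) : ∫⁻ ω, f (ω j) ∂(Measure.infinitePi fun _ => μ) = ∫⁻ x, f x ∂μ := by
    rw [← lintegral_map hf (measurable_pi_apply j), Measure.infinitePi_map_eval (fun _ => μ) j]
  simp only [empShift, lintegral_smul_measure, lintegral_finsetSum_measure, smul_eq_mul,
    lintegral_dirac' _ hf]
  rw [lintegral_const_mul _ (by fun_prop), lintegral_finsetSum _ fun i _ => by fun_prop]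
  simp only [hcoord, Finset.sum_const, Finset.card_range, nsmul_eq_mul]
  rw [← mul_assoc, ENNReal.inv_mul_cancel (by simpa using (by omega : m ≠ 0))
    (ENNReal.natCast_ne_top m), one_mul]

lemma indepFun_initialSegment_empShift (μ : Measure X) [IsProbabilityMeasure μ] (n m : ℕ) :
    IndepFun (initialSegment n) (empShift n m) (Measure.infinitePi fun _ : ℕ => μ) := by
  have hcoord : iIndepFun (fun (i : ℕ) (ω : ℕ → X) => ω i) (Measure.infinitePi fun _ => μ) :=
    iIndepFun_infinitePi (X := fun _ x => x) fun _ => measurable_id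
  have hblocks := hcoord.indepFun_finset (Finset.range n) (Finset.Ico n (n + m))
    (Finset.disjoint_left.2 fun i hi hi' => by simp at hi hi'; omega)
    fun i => measurable_pi_apply i
  have hpast : Measurable fun (w : Finset.range n → X) (i : Fin n) =>
      w ⟨i, Finset.mem_range.2 i.2⟩ := measurable_pi_lambda _ fun _ => measurable_pi_apply _
  have hfuture : Measurable fun (w : Finset.Ico n (n + m) → X) (i : Fin m) =>
      w ⟨i + n, Finset.mem_Ico.2 ⟨by omega, by omega⟩⟩ :=
    measurable_pi_lambda _ fun _ => measurable_pi_apply _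
  refine (hblocks.comp hpast ((measurable_sum_smul_dirac (m : ℝ≥0∞)⁻¹ Finset.univ).comp
    hfuture)).congr (.of_forall fun _ => rfl) (.of_forall fun ω => ?_)
  simp only [empShift, Function.comp, Finset.sum_range]

/-- The kernel sending a parameter `a` to the law of the empirical measure of `m` i.i.d.
observations with law `κ a`; the observations are those following the `n`-th one, as in
`empShift`. -/
def empKernel (n m : ℕ) (κ : Kernel A X) [IsMarkovKernel κ] : Kernel A (Measure X) :=
  (iidKernel κ).map (empShift n m)

instance (n m : ℕ) (κ : Kernel A X) [IsMarkovKernel κ] : IsMarkovKernel (empKernel n m κ) :=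
  Kernel.IsMarkovKernel.map _ (measurable_empShift n m)

lemma empKernel_map {κ : Kernel A X} [IsMarkovKernel κ] {η : Kernel A Y} [IsMarkovKernel η]
    {f : X → Y} (hf : Measurable f) (h : κ.map f = η) (n m : ℕ) :
    (empKernel n m κ).map (Measure.map f) = empKernel n m η := by
  rw [empKernel, empKernel, ← iidKernel_map hf h,
    ← Kernel.map_comp_right _ (measurable_empShift n m) (Measure.measurable_map f hf),
    ← Kernel.map_comp_right _ (by fun_prop) (measurable_empShift n m)]
  congr 1
  exact funext fun ω => empShift_map hf n m ω

lemma empKernel_comap {B : Type*} [MeasurableSpace B] (κ : Kernel A X) [IsMarkovKernel κ]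
    {g : B → A} (hg : Measurable g) (n m : ℕ) :
    empKernel n m (κ.comap g hg) = (empKernel n m κ).comap g hg := by
  ext1 b
  rw [Kernel.comap_apply, empKernel, empKernel, Kernel.map_apply _ (measurable_empShift n m),
    Kernel.map_apply _ (measurable_empShift n m)]
  rfl

lemma empKernel_comap_comp_measure {n : ℕ} (m : ℕ) (η : Kernel (Fin n → X) X) [IsMarkovKernel η]
    {Q : Measure (ℕ → X)} [IsProbabilityMeasure Q] {v : Fin n → X}
    (hv : ∀ᵐ ω ∂Q, initialSegment n ω = v) :
    empKernel n m (η.comap (initialSegment n) (measurable_initialSegment n)) ∘ₘ Q =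
      empKernel n m η v := by
  rw [empKernel_comap]
  calc _ = Q.bind fun _ => empKernel n m η v :=
        Measure.bind_congr_right (hv.mono fun ω hω => by rw [Kernel.comap_apply, hω])
    _ = _ := by rw [Measure.bind_const, measure_univ, one_smul]

lemma lintegral_empKernel (κ : Kernel A X) [IsMarkovKernel κ] (n : ℕ) {m : ℕ} (hm : 1 ≤ m)
    {f : X → ℝ≥0∞} (hf : Measurable f) (a : A) :
    ∫⁻ μ, ∫⁻ x, f x ∂μ ∂empKernel n m κ a = ∫⁻ x, f x ∂κ a := by
  rw [empKernel, Kernel.map_apply _ (measurable_empShift n m),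
    lintegral_map (Measure.measurable_lintegral hf) (measurable_empShift n m)]
  exact lintegral_empShift_infinitePi (κ a) n hm hf

lemma hasCondDistrib_empShift {ρ : Measure (ℕ → X)} [IsFiniteMeasure ρ] {θ : (ℕ → X) → A}
    (hθ : Measurable θ) {κ : Kernel A X} [IsMarkovKernel κ]
    (hκ : HasCondDistrib id θ (iidKernel κ) ρ) {n : ℕ} {Q : Kernel (Fin n → X) (ℕ → X)}
    [IsFiniteKernel Q] (hQ : HasCondDistrib id (initialSegment n) Q ρ) (m : ℕ) :
    HasCondDistrib (empShift n m) (initialSegment n) ((empKernel n m κ).comap θ hθ ∘ₖ Q) ρ :=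
  hasCondDistrib_comp_of_indepFun hθ (measurable_initialSegment n) (measurable_empShift n m) hκ hQ
    fun a => indepFun_initialSegment_empShift (κ a) n m

lemma countablyGenerated_isProbabilityMeasure [MeasurableSpace.CountablyGenerated X] :
    MeasurableSpace.CountablyGenerated {μ : Measure X | IsProbabilityMeasure μ} := by
  let 𝒜 := generateSetAlgebra (MeasurableSpace.countableGeneratingSet X)
  have hgen : ‹MeasurableSpace X› = MeasurableSpace.generateFrom 𝒜 := by
    rw [generateFrom_generateSetAlgebra_eq, MeasurableSpace.generateFrom_countableGeneratingSet]
  have hpi : IsPiSystem 𝒜 := fun s hs t ht _ => isSetAlgebra_generateSetAlgebra.inter_mem hs ht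
  have : Countable 𝒜 :=
    countable_generateSetAlgebra MeasurableSpace.countable_countableGeneratingSet
  let eval (μ : {μ : Measure X | IsProbabilityMeasure μ}) (B : 𝒜) : ℝ≥0∞ := (μ : Measure X) B
  have heval : Measurable eval := measurable_pi_lambda _ fun B => (Measure.measurable_coe
    (hgen ▸ MeasurableSpace.measurableSet_generateFrom B.2)).comp measurable_subtype_coe
  have hcomap : (Subtype.instMeasurableSpace :
      MeasurableSpace {μ : Measure X | IsProbabilityMeasure μ}) = .comap eval inferInstance := by
    refine le_antisymm (measurable_iff_comap_le.1 ?_) heval.comap_le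
    let := MeasurableSpace.comap eval inferInstance
    have (μ : {μ : Measure X | IsProbabilityMeasure μ}) : IsProbabilityMeasure (μ : Measure X) :=
      μ.2
    exact Measurable.measure_of_isPiSystem_of_isProbabilityMeasure hgen hpi fun B hB =>
      (measurable_pi_apply (⟨B, hB⟩ : 𝒜)).comp (comap_measurable eval)
  rw [hcomap]
  exact MeasurableSpace.CountablyGenerated.comap eval

end EmpiricalMeasure

section MixtureWasserstein

variable {p : ℝ}

lemma ofReal_wassW_wassW_rpow_le {X : Type*} [MeasurableSpace X] {c : X → X → ℝ}
    (hc : ∀ x y, 0 ≤ c x y) (hp : 0 < p) (Γ : Measure (Measure (X × X))) :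
    ENNReal.ofReal (wassW (wassW c p) p (Γ.map Measure.fst) (Γ.map Measure.snd)) ^ p ≤
      ∫⁻ γ, ∫⁻ z, ENNReal.ofReal (c z.1 z.2) ^ p ∂γ ∂Γ := by
  have hfst : Measurable (Measure.fst (α := X) (β := X)) :=
    Measure.measurable_map _ measurable_fst
  have hsnd : Measurable (Measure.snd (α := X) (β := X)) :=
    Measure.measurable_map _ measurable_snd
  calc ENNReal.ofReal (wassW (wassW c p) p (Γ.map Measure.fst) (Γ.map Measure.snd)) ^ p
      ≤ ∫⁻ μ, ENNReal.ofReal (wassW c p μ.1 μ.2) ^ p ∂Γ.map fun γ => (γ.fst, γ.snd) :=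
        ofReal_wassW_rpow_le (fun _ _ => wassW_nonneg hc) hp (Measure.fst_map_prodMk hsnd)
          (Measure.snd_map_prodMk hfst)
    _ ≤ ∫⁻ γ, ENNReal.ofReal (wassW c p γ.fst γ.snd) ^ p ∂Γ := lintegral_map_le _ _
    _ ≤ ∫⁻ γ, ∫⁻ z, ENNReal.ofReal (c z.1 z.2) ^ p ∂γ ∂Γ :=
        lintegral_mono fun _ => ofReal_wassW_rpow_le hc hp rfl rfl

variable {A S : Type*} [MeasurableSpace A] [MetricSpace S] [SecondCountableTopology S]
  [MeasurableSpace S] [BorelSpace S] [Nonempty S] {κ η : Kernel A S} [IsMarkovKernel κ]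
  [IsMarkovKernel η]

-- A coupling is given by the empirical measures of i.i.d. pairs drawn from near-optimal couplings
-- of `κ a` and `η a`.
lemma ofReal_wassW_empKernel_rpow_le (hp : 1 ≤ p) (hκ : ∀ a, MemWp p (κ a))
    (hη : ∀ a, MemWp p (η a)) (Q : Measure A) [IsProbabilityMeasure Q] (n : ℕ) {m : ℕ}
    (hm : 1 ≤ m) :
    ENNReal.ofReal (wassW (wassW (fun u v => dist u v) p) p (empKernel n m κ ∘ₘ Q)
        (empKernel n m η ∘ₘ Q)) ^ p ≤
      ∫⁻ a, ENNReal.ofReal (wassW (fun u v => dist u v) p (κ a) (η a)) ^ p ∂Q := by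
  refine ENNReal.le_of_forall_pos_le_add fun δ hδ _ => ?_
  obtain ⟨G, rfl, rfl, hG⟩ := exists_kernel_coupling hp hκ hη (ENNReal.coe_ne_zero.2 hδ.ne')
  have : IsMarkovKernel G := ⟨fun a => ⟨by
    rw [← Measure.fst_univ, Measure.fst, ← Kernel.fst_apply, measure_univ]⟩⟩
  have hfst : empKernel n m G.fst ∘ₘ Q = (empKernel n m G ∘ₘ Q).map Measure.fst := by
    rw [← empKernel_map measurable_fst (Kernel.fst_eq G).symm n m]
    exact (Measure.map_comp _ _ (Measure.measurable_map _ measurable_fst)).symm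
  have hsnd : empKernel n m G.snd ∘ₘ Q = (empKernel n m G ∘ₘ Q).map Measure.snd := by
    rw [← empKernel_map measurable_snd (Kernel.snd_eq G).symm n m]
    exact (Measure.map_comp _ _ (Measure.measurable_map _ measurable_snd)).symm
  rw [hfst, hsnd]
  calc _ ≤ ∫⁻ γ, ∫⁻ z, ENNReal.ofReal (dist z.1 z.2) ^ p ∂γ ∂(empKernel n m G ∘ₘ Q) :=
        ofReal_wassW_wassW_rpow_le (fun _ _ => dist_nonneg) (by linarith) _
    _ = ∫⁻ a, ∫⁻ z, edist z.1 z.2 ^ p ∂G a ∂Q := by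
        simp only [← edist_dist]
        rw [Measure.lintegral_bind (Kernel.aemeasurable _)
          (Measure.measurable_lintegral (by fun_prop)).aemeasurable]
        exact lintegral_congr fun a => lintegral_empKernel G n hm (by fun_prop) a
    _ ≤ _ := lintegral_mono hG
    _ = _ := by rw [lintegral_add_right _ measurable_const, lintegral_const, measure_univ, mul_one]

end MixtureWasserstein

section PredictiveMerging

open Filter

variable {A S : Type*} [MeasurableSpace A] [MetricSpace S] [MeasurableSpace S] {p : ℝ}
  {κ : Kernel A S} {phat : ∀ n, Kernel (Fin n → S) S}

/-- The rescaled error `b_n d^{(p)}(p̃, p̂_n)` of the estimators `p̂_n = phat n`, as a function of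
the parameter `a` of `p̃ = κ a` and of the sequence of observations. -/
def rescaledError (p : ℝ) (κ : Kernel A S) (phat : ∀ n, Kernel (Fin n → S) S) (b : ℕ → ℝ)
    (n : ℕ) (z : A × (ℕ → S)) : ℝ≥0∞ :=
  ENNReal.ofReal (b n * wassW (fun u v => dist u v) p (κ z.1) (phat n (initialSegment n z.2)))

lemma rescaledError_eq_mul (b : ℕ → ℝ) (n : ℕ) (z : A × (ℕ → S)) :
    rescaledError p κ phat b n z = ENNReal.ofReal (b n) *
      ENNReal.ofReal (wassW (fun u v => dist u v) p (κ z.1) (phat n (initialSegment n z.2))) :=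
  ENNReal.ofReal_mul' (wassW_nonneg fun _ _ => dist_nonneg)

lemma ennreal_limsup_rpow (hp : 0 < p) (u : ℕ → ℝ≥0∞) :
    limsup (fun n => u n ^ p) atTop = limsup u atTop ^ p :=
  ((ENNReal.orderIsoRpow p hp).limsup_apply).symm

variable [SecondCountableTopology S] [BorelSpace S] [Nonempty S] [IsMarkovKernel κ]
  [∀ n, IsMarkovKernel (phat n)] {ρ : Measure (ℕ → S)} [IsProbabilityMeasure ρ]
  {θ : (ℕ → S) → A}

lemma ae_ofReal_wassW_predictive_rpow_le (hp : 1 ≤ p) (hκp : ∀ a, MemWp p (κ a))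
    (hθ : Measurable θ) (hκ : HasCondDistrib id θ (iidKernel κ) ρ) {n m : ℕ} (hm : 1 ≤ m)
    {η : Kernel (Fin n → S) S} [IsMarkovKernel η] (hηp : ∀ v, MemWp p (η v))
    {q : Kernel (Fin n → S) (Measure S)} [IsFiniteKernel q]
    (hq : HasCondDistrib (empShift n m) (initialSegment n) q ρ)
    {Q : Kernel (Fin n → S) (ℕ → S)} [IsMarkovKernel Q]
    (hQ : HasCondDistrib id (initialSegment n) Q ρ) :
    ∀ᵐ ω ∂ρ, ENNReal.ofReal (wassW (wassW (fun u v => dist u v) p) p (q (initialSegment n ω))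
        (empKernel n m η (initialSegment n ω))) ^ p ≤
      ∫⁻ ω', ENNReal.ofReal (wassW (fun u v => dist u v) p (κ (θ ω'))
        (η (initialSegment n ω'))) ^ p ∂Q (initialSegment n ω) := by
  have := countablyGenerated_isProbabilityMeasure (X := S)
  have h_mixture := ae_eq_of_hasCondDistrib ProbabilityMeasure.measurableSet_isProbabilityMeasure
    ⟨_, Measure.dirac.isProbabilityMeasure (x := Classical.arbitrary S)⟩ hq
    (hasCondDistrib_empShift hθ hκ hQ m) (.of_forall (isProbabilityMeasure_empShift n hm))
  filter_upwards [h_mixture, ae_ae_eq_of_hasCondDistrib_id (measurable_initialSegment n) hQ]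
    with ω hmix hconc
  rw [hmix, Kernel.comp_apply, ← empKernel_comap, ← empKernel_comap_comp_measure m η hconc]
  exact ofReal_wassW_empKernel_rpow_le (κ := κ.comap θ hθ)
    (η := η.comap _ (measurable_initialSegment n)) hp (fun _ => hκp _) (fun _ => hηp _)
    (Q (initialSegment n ω)) n hm

lemma measurable_rescaledError (hp : 1 ≤ p) (hκp : ∀ a, MemWp p (κ a))
    (hphat : ∀ n v, MemWp p (phat n v)) (b : ℕ → ℝ) (n : ℕ) :
    Measurable (rescaledError p κ phat b n) := by
  rw [funext (rescaledError_eq_mul b n)]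
  exact (measurable_ofReal_wassW_kernel (κ := κ.comap Prod.fst measurable_fst)
    (η := (phat n).comap _ ((measurable_initialSegment n).comp measurable_snd)) hp
    (fun _ => hκp _) fun _ => hphat _ _).const_mul _

lemma ae_ofReal_mul_wassW_predictive_rpow_le (hp : 1 ≤ p) (hκp : ∀ a, MemWp p (κ a))
    (hθ : Measurable θ) (hκ : HasCondDistrib id θ (iidKernel κ) ρ) {n m : ℕ} (hm : 1 ≤ m)
    (hphat : ∀ n v, MemWp p (phat n v)) {q : Kernel (Fin n → S) (Measure S)} [IsFiniteKernel q]
    (hq : HasCondDistrib (empShift n m) (initialSegment n) q ρ)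
    {Q : Kernel (Fin n → S) (ℕ → S)} [IsMarkovKernel Q]
    (hQ : HasCondDistrib id (initialSegment n) Q ρ) (b : ℕ → ℝ) :
    ∀ᵐ ω ∂ρ, ENNReal.ofReal (b n * wassW (wassW (fun u v => dist u v) p) p
        (q (initialSegment n ω)) (empKernel n m (phat n) (initialSegment n ω))) ^ p ≤
      ∫⁻ ω', rescaledError p κ phat b n (θ ω', ω') ^ p ∂Q (initialSegment n ω) := by
  have hp0 : 0 ≤ p := by linarith
  filter_upwards [ae_ofReal_wassW_predictive_rpow_le hp hκp hθ hκ hm (hphat n) hq hQ] with ω hω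
  simp only [rescaledError_eq_mul, ENNReal.mul_rpow_of_nonneg _ _ hp0]
  rw [lintegral_const_mul' _ _ (ENNReal.rpow_ne_top_of_nonneg hp0 ENNReal.ofReal_ne_top),
    ENNReal.ofReal_mul' (wassW_nonneg fun _ _ => wassW_nonneg fun _ _ => dist_nonneg),
    ENNReal.mul_rpow_of_nonneg _ _ hp0]
  gcongr

theorem ae_limsup_predictive_le (hρ : ∀ i, (ρ.map fun ω => ω i).InnerRegular) (hp : 1 ≤ p)
    (hκp : ∀ a, MemWp p (κ a)) (hθ : Measurable θ) (hκ : HasCondDistrib id θ (iidKernel κ) ρ)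
    (hphat : ∀ n v, MemWp p (phat n v)) {m : ℕ} (hm : 1 ≤ m)
    {q : ∀ n, Kernel (Fin n → S) (Measure S)} [∀ n, IsFiniteKernel (q n)]
    (hq : ∀ n, HasCondDistrib (empShift n m) (initialSegment n) (q n) ρ) {b : ℕ → ℝ}
    (hC : ∫⁻ ω, ∫⁻ ω', ⨆ n, rescaledError p κ phat b (n + 1) (θ ω, ω') ^ p
      ∂iidKernel κ (θ ω) ∂ρ ≠ ∞) {Y : (ℕ → S) → ℝ≥0∞}
    (hY : ∀ᵐ ω ∂ρ, ∀ᵐ ω' ∂iidKernel κ (θ ω),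
      limsup (fun n => rescaledError p κ phat b (n + 1) (θ ω, ω')) atTop ≤ Y ω) :
    ∀ᵐ ω ∂ρ, limsup (fun n => ENNReal.ofReal (b n * wassW (wassW (fun u v => dist u v) p) p
      (q n (initialSegment n ω)) (empKernel n m (phat n) (initialSegment n ω)))) atTop ≤ Y ω := by
  have hp0 : 0 < p := by linarith
  have hZ (n : ℕ) := measurable_rescaledError hp hκp hphat b n
  choose Q hQ_markov hQ using fun n =>
    exists_hasCondDistrib_id_pi ρ hρ (measurable_initialSegment n).aemeasurable
  have h_bound : ∀ᵐ ω ∂ρ, ∀ n, _ := ae_all_iff.2 fun n =>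
    ae_ofReal_mul_wassW_predictive_rpow_le hp hκp hθ hκ hm hphat (hq n) (hQ n) b
  have h_fatou := ae_limsup_lintegral_le_of_hasCondDistrib_id
    (Z := fun n ω => rescaledError p κ phat b (n + 1) (θ ω, ω) ^ p)
    (fun n => measurable_initialSegment (n + 1))
    (monotone_comap_initialSegment.comp fun _ _ h => by gcongr) iSup_comap_initialSegment_add_one
    (fun n => hQ (n + 1)) (fun n => ((hZ _).comp (hθ.prodMk measurable_id)).pow_const p)
    (by rwa [← lintegral_of_hasCondDistrib hκ (.iSup fun n => (hZ _).pow_const p)] at hC)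
  have h_limit := ae_le_of_hasCondDistrib hκ (.limsup fun n => hZ (n + 1)) hY
  filter_upwards [h_bound, h_fatou, h_limit] with ω hbound hfatou hlimit
  refine (ENNReal.rpow_le_rpow_iff hp0).1 ?_
  rw [← ennreal_limsup_rpow hp0, ← limsup_nat_add _ 1]
  calc _ ≤ _ := limsup_le_limsup (.of_forall fun n => hbound (n + 1))
    _ ≤ _ := hfatou
    _ = _ := ennreal_limsup_rpow hp0 _
    _ ≤ Y ω ^ p := ENNReal.rpow_le_rpow hlimit hp0.le

end PredictiveMerging

section DirectingMeasure

variable {S : Type*} [MetricSpace S] [MeasurableSpace S]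

/-- The space `[S]_p` of parameters, viewed as a kernel: `𝔭 ∈ [S]_p` is sent to the measure `𝔭`. -/
def momentKernel (p : ℝ) : Kernel {𝔭 : Measure S // MemWp p 𝔭} S :=
  ⟨Subtype.val, measurable_subtype_coe⟩

instance (p : ℝ) : IsMarkovKernel (momentKernel (S := S) p) :=
  ⟨fun 𝔭 => 𝔭.2.1⟩

variable {iid : Measure S → Measure (ℕ → S)} {ρ : Measure (ℕ → S)} [IsProbabilityMeasure ρ]
  {ptilde : (ℕ → S) → Measure S} {p : ℝ}

lemma exists_hasCondDistrib_momentKernel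
    (hiid : ∀ 𝔭 : {𝔭 : Measure S // MemWp p 𝔭}, iid 𝔭 = iidKernel (momentKernel p) 𝔭)
    (hptilde : Measurable ptilde) (hptildeWp : ∀ᵐ ω ∂ρ, MemWp p (ptilde ω))
    (hdirect : ∀ C : Set (ℕ → S), MeasurableSet C → ∀ B : Set (Measure S), MeasurableSet B →
      ρ (C ∩ ptilde ⁻¹' B) = ∫⁻ ω in ptilde ⁻¹' B, iid (ptilde ω) C ∂ρ) :
    ∃ θ : (ℕ → S) → {𝔭 : Measure S // MemWp p 𝔭}, Measurable θ ∧
      (∀ᵐ ω ∂ρ, (θ ω : Measure S) = ptilde ω) ∧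
      HasCondDistrib id θ (iidKernel (momentKernel p)) ρ := by
  obtain ⟨ω₀, hω₀⟩ := hptildeWp.exists
  obtain ⟨g, hg, hgWp, hg_eq⟩ := hptilde.aemeasurable.exists_ae_eq_range_subset
    (t := {𝔭 | MemWp p 𝔭}) hptildeWp ⟨_, hω₀⟩
  have hθ : Measurable fun ω => (⟨g ω, hgWp ⟨ω, rfl⟩⟩ : {𝔭 : Measure S // MemWp p 𝔭}) :=
    hg.subtype_mk
  refine ⟨_, hθ, hg_eq.symm, hasCondDistrib_of_setLIntegral hθ aemeasurable_id ?_⟩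
  rintro _ ⟨B, hB, rfl⟩ C hC
  have hset : g ⁻¹' B =ᵐ[ρ] ptilde ⁻¹' B := by
    filter_upwards [hg_eq] with ω hω
    exact congrArg (· ∈ B) hω.symm
  calc ρ (g ⁻¹' B ∩ C) = ρ (C ∩ ptilde ⁻¹' B) := by
        rw [Set.inter_comm]
        exact measure_congr ((ae_eq_refl C).inter hset)
    _ = ∫⁻ ω in g ⁻¹' B, iid (g ω) C ∂ρ := by
        rw [hdirect C hC B hB, setLIntegral_congr hset]
        exact lintegral_congr_ae (ae_restrict_of_ae (hg_eq.mono fun ω hω => by simp only [hω]))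
    _ = _ := lintegral_congr fun ω => by rw [← hiid]

end DirectingMeasure

theorem predictive_merging_general
    {S : Type*} [MetricSpace S] [TopologicalSpace.SeparableSpace S]
    [MeasurableSpace S] [BorelSpace S]
    (iid : Measure S → Measure (ℕ → S))
    (hiid : ∀ 𝔭 : Measure S, IsProbabilityMeasure 𝔭 → ∀ (n : ℕ) (A : Fin n → Set S),
      (∀ i, MeasurableSet (A i)) → iid 𝔭 {ω | ∀ i : Fin n, ω (i : ℕ) ∈ A i} = ∏ i, 𝔭 (A i))
    (ρ : Measure (ℕ → S)) [IsProbabilityMeasure ρ]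
    (hρ : ∀ i, (ρ.map fun ω => ω i).InnerRegular)
    (ptilde : (ℕ → S) → Measure S) (hptilde : Measurable ptilde)
    (hdirect : ∀ C : Set (ℕ → S), MeasurableSet C → ∀ B : Set (Measure S), MeasurableSet B →
      ρ (C ∩ ptilde ⁻¹' B) = ∫⁻ ω in ptilde ⁻¹' B, iid (ptilde ω) C ∂ρ)
    (p : ℝ) (hp : 1 ≤ p) (hptildeWp : ∀ᵐ ω ∂ρ, MemWp p (ptilde ω))
    (phat : (n : ℕ) → Kernel (Fin n → S) S) (hphat : ∀ n v, MemWp p (phat n v))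
    (m : ℕ) (hm : 1 ≤ m) (q : (n : ℕ) → Kernel (Fin n → S) (Measure S))
    [∀ n, IsMarkovKernel (q n)]
    (hq : ∀ n, HasCondDistrib (empShift n m) (initialSegment n) (q n) ρ)
    (b : ℕ → ℝ) (hb : ∀ n, 0 ≤ b n) (Y : (ℕ → S) → ℝ≥0∞)
    (hC : ∫⁻ ω, ∫⁻ ω', ⨆ n, ENNReal.ofReal
      ((b (n + 1) * wassW (fun u v => dist u v) p (ptilde ω)
        (phat (n + 1) (initialSegment (n + 1) ω'))) ^ p) ∂iid (ptilde ω) ∂ρ ≠ ∞)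
    (hY : ∀ᵐ ω ∂ρ, ∀ᵐ ω' ∂iid (ptilde ω), Filter.limsup (fun n => ENNReal.ofReal
      (b (n + 1) * wassW (fun u v => dist u v) p (ptilde ω)
        (phat (n + 1) (initialSegment (n + 1) ω')))) Filter.atTop ≤ Y ω) :
    ∀ᵐ ω ∂ρ, Filter.limsup (fun n => ENNReal.ofReal
      (b n * wassW (wassW (fun u v => dist u v) p) p (q n (initialSegment n ω))
        ((iid (phat n (initialSegment n ω))).map (empShift n m)))) Filter.atTop ≤ Y ω := by
  have := UniformSpace.secondCountable_of_separable S
  have : Nonempty S := ρ.nonempty_of_neZero.map fun ω => ω 0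
  have (n : ℕ) : IsMarkovKernel (phat n) := ⟨fun v => (hphat n v).1⟩
  have hiid' {𝔭 : Measure S} [IsProbabilityMeasure 𝔭] : iid 𝔭 = Measure.infinitePi fun _ => 𝔭 :=
    eq_infinitePi_of_forall_fin (hiid 𝔭 inferInstance)
  obtain ⟨θ, hθ, hθ_eq, hκ⟩ := exists_hasCondDistrib_momentKernel
    (fun 𝔭 => have := 𝔭.2.1; hiid') hptilde hptildeWp hdirect
  have hlaw : ∀ᵐ ω ∂ρ, iid (ptilde ω) = iidKernel (momentKernel p) (θ ω) :=
    hθ_eq.mono fun ω hω => have := (θ ω).2.1; hω ▸ hiid'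
  have hemp (n v) : (iid (phat n v)).map (empShift n m) = empKernel n m (phat n) v := by
    rw [hiid', empKernel, Kernel.map_apply _ (measurable_empShift n m)]
    rfl
  simp only [hemp]
  refine ae_limsup_predictive_le hρ hp Subtype.prop hθ hκ hphat hm hq (b := b) ?_ ?_
  · refine (lintegral_congr_ae ?_).trans_ne hC
    filter_upwards [hθ_eq, hlaw] with ω hθω hlawω
    rw [← hlawω]
    refine lintegral_congr fun ω' => iSup_congr fun n => ?_
    rw [rescaledError, ENNReal.ofReal_rpow_of_nonneg
      (mul_nonneg (hb _) (wassW_nonneg fun _ _ => dist_nonneg)) (by linarith), ← hθω]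
    rfl
  · filter_upwards [hY, hθ_eq, hlaw] with ω hω hθω hlawω
    rw [← hlawω]
    simp only [← hθω] at hω ⊢
    exact hω

/-- merging of predictive distributions: under the hypotheses of the
posterior-merging theorem, for every `m ≥ 1`, `ρ`-almost surely
`limsup_n b_n d^{(p)}_{[[S]_p]}( q_m(ξ^{(n)}), p̂_n^∞ ∘ ẽ_{n,m}⁻¹ ) ≤ Y_p(p̃)`. -/
theorem predictive_merging
    {S : Type*} [MetricSpace S] [TopologicalSpace.SeparableSpace S]
    [MeasurableSpace S] [BorelSpace S]
    (hRadon : ∀ μ : Measure S, IsProbabilityMeasure μ → μ.InnerRegular)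
    (iid : Measure S → Measure (ℕ → S))
    (hiid : ∀ 𝔭 : Measure S, IsProbabilityMeasure 𝔭 →
      IsProbabilityMeasure (iid 𝔭) ∧
        ∀ (n : ℕ) (A : Fin n → Set S), (∀ i, MeasurableSet (A i)) →
          iid 𝔭 {ω | ∀ i : Fin n, ω (i : ℕ) ∈ A i} = ∏ i, 𝔭 (A i))
    (ρ : Measure (ℕ → S)) [IsProbabilityMeasure ρ]
    (hexch : ∀ σ : Equiv.Perm ℕ, ρ.map (fun ω => ω ∘ σ) = ρ)
    (ptilde : (ℕ → S) → Measure S) (hptilde_meas : Measurable ptilde)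
    (hptilde_prob : ∀ᵐ ω ∂ρ, IsProbabilityMeasure (ptilde ω))
    (hdirect : ∀ C : Set (ℕ → S), MeasurableSet C → ∀ B : Set (Measure S), MeasurableSet B →
      ρ (C ∩ ptilde ⁻¹' B) = ∫⁻ ω in ptilde ⁻¹' B, iid (ptilde ω) C ∂ρ)
    (p : ℝ) (hp : 1 ≤ p)
    (phat : (n : ℕ) → (Fin n → S) → Measure S)
    (hphat_meas : ∀ n, Measurable (phat n))
    (hphatWp : ∀ n v, MemWp p (phat n v))
    (hptildeWp : ∀ᵐ ω ∂ρ, MemWp p (ptilde ω))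
    -- the conditional distributions `q_m(ξ^{(n)})` of `ẽ_{n,m}` given `ξ^{(n)}`
    (qm : (m n : ℕ) → (Fin n → S) → Measure (Measure S))
    (hqm_prob : ∀ m n v, IsProbabilityMeasure (qm m n v))
    (hqm_meas : ∀ m n, Measurable (qm m n))
    (hqm : ∀ (m n : ℕ) (A : Set (Fin n → S)), MeasurableSet A →
      ∀ B : Set (Measure S), MeasurableSet B →
        ρ {ω | (fun i : Fin n => ω (i : ℕ)) ∈ A ∧ empShift n m ω ∈ B}
          = ∫⁻ ω in {ω | (fun i : Fin n => ω (i : ℕ)) ∈ A},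
              qm m n (fun i : Fin n => ω (i : ℕ)) B ∂ρ)
    -- the sequence `b_n`
    (b : ℕ → ℝ) (hbpos : ∀ n, 0 < b n) (hbmono : Monotone b)
    (hbdiv : Filter.Tendsto b Filter.atTop Filter.atTop)
    -- the random constants `C_p(p̃)` and `Y_p(p̃)`
    (Cp Yp : Measure S → ℝ)
    (hCp_meas : Measurable fun ω => Cp (ptilde ω))
    (hYp_meas : Measurable fun ω => Yp (ptilde ω))
    (hCp_int : Integrable (fun ω => Cp (ptilde ω)) ρ)
    (hMain1 : ∀ᵐ ω ∂ρ, ∫⁻ ω', ⨆ n : ℕ, ENNReal.ofReal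
        ((b (n + 1) * wassW (fun u v => dist u v) p (ptilde ω)
          (phat (n + 1) (fun i : Fin (n + 1) => ω' (i : ℕ)))) ^ p) ∂(iid (ptilde ω))
        ≤ ENNReal.ofReal (Cp (ptilde ω)))
    (hMain2 : ∀ᵐ ω ∂ρ, ∀ᵐ ω' ∂(iid (ptilde ω)),
      Filter.limsup (fun n : ℕ => ENNReal.ofReal
          (b (n + 1) * wassW (fun u v => dist u v) p (ptilde ω)
            (phat (n + 1) (fun i : Fin (n + 1) => ω' (i : ℕ))))) Filter.atTop
        ≤ ENNReal.ofReal (Yp (ptilde ω))) :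
    ∀ (m : ℕ), 1 ≤ m →
      ∀ᵐ ω ∂ρ, Filter.limsup (fun n : ℕ => ENNReal.ofReal
          (b n * wassW (fun μ ν => wassW (fun u v => dist u v) p μ ν) p
            (qm m n (fun i : Fin n => ω (i : ℕ)))
            ((iid (phat n (fun i : Fin n => ω (i : ℕ)))).map (empShift n m)))) Filter.atTop
        ≤ ENNReal.ofReal (Yp (ptilde ω)) := by
  intro m hm
  let q (n : ℕ) : Kernel (Fin n → S) (Measure S) := ⟨qm m n, hqm_meas m n⟩
  have (n : ℕ) : IsMarkovKernel (q n) := ⟨hqm_prob m n⟩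
  exact predictive_merging_general iid (fun 𝔭 h𝔭 => (hiid 𝔭 h𝔭).2) ρ
    (fun i => hRadon _ (Measure.isProbabilityMeasure_map (measurable_pi_apply i).aemeasurable))
    ptilde hptilde_meas hdirect p hp hptildeWp (fun n => ⟨phat n, hphat_meas n⟩) hphatWp m hm q
    (fun n => hasCondDistrib_of_setLIntegral (measurable_initialSegment n)
      (measurable_empShift n m).aemeasurable (hqm m n))
    b (fun n => (hbpos n).le) _ ((lintegral_mono_ae hMain1).trans_lt hCp_int.lintegral_lt_top).ne
    hMain2

end
end

section
/- Let M be a symmetric positive-definite d×d real matrix with eigenvalues λ_1, …, λ_d (counted with multiplicity), and suppose det(M) ≥ ε for some ε ∈ (0,1). Then there exists a positive constant K(ε,d), depending only on ε and d, such that Σ_{j=1}^d (λ_j − 1 − log λ_j) ≤ K(ε,d) · Σ_{j=1}^d (λ_j − 1)² = K(ε,d) · ‖M − Id_d‖_F², where Id_d is the d×d identity matrix and ‖·‖_F the Frobenius norm. -/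
open scoped ENNReal

noncomputable section

/-- The Frobenius norm of a real square matrix. -/
noncomputable def frobNorm {d : ℕ} (A : Matrix (Fin d) (Fin d) ℝ) : ℝ :=
  Real.sqrt (∑ i, ∑ j, A i j ^ 2)

/-!
Put `S = ∑ (λⱼ - 1)²`. Pointwise, `x - 1 - log x ≤ (x - 1)² / x`, so if every eigenvalue is at
least `1/2` the sum is at most `2 S`. If some eigenvalue is smaller than `1/2`, then `S ≥ 1/4`, and
any bound of the form `S + C` yields `(1 + 4 C) S`. Such a bound holds because the determinant
controls the logarithms, `-∑ log λⱼ = -log (det M) ≤ -log ε`, while `x - 1 ≤ (x - 1)² + 1/4`.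
The equality `S = ‖M - 1‖_F²` is the unitary invariance of the Frobenius norm.
-/

section Scalar

variable {ι : Type*} {s : Finset ι} {x : ι → ℝ}

theorem sub_one_sub_log_le_sq_div {x : ℝ} (hx : 0 < x) :
    x - 1 - Real.log x ≤ (x - 1) ^ 2 / x := by
  calc x - 1 - Real.log x ≤ x - 1 - (1 - x⁻¹) := by
        gcongr
        exact Real.one_sub_inv_le_log_of_pos hx
    _ = (x - 1) ^ 2 / x := by field_simp

theorem sum_sub_one_sub_log_le_of_forall_le {a : ℝ} (ha : 0 < a) (hx : ∀ i ∈ s, a ≤ x i) :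
    ∑ i ∈ s, (x i - 1 - Real.log (x i)) ≤ (∑ i ∈ s, (x i - 1) ^ 2) / a := by
  rw [Finset.sum_div]
  refine Finset.sum_le_sum fun i hi => ?_
  calc x i - 1 - Real.log (x i) ≤ (x i - 1) ^ 2 / x i :=
        sub_one_sub_log_le_sq_div (ha.trans_le (hx i hi))
    _ ≤ (x i - 1) ^ 2 / a := by
        gcongr
        exact hx i hi

theorem sum_sub_one_sub_log_le_of_le_prod {ε : ℝ} (hε : 0 < ε) (hx : ∀ i ∈ s, x i ≠ 0)
    (hprod : ε ≤ ∏ i ∈ s, x i) :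
    ∑ i ∈ s, (x i - 1 - Real.log (x i)) ≤
      ∑ i ∈ s, (x i - 1) ^ 2 + (s.card / 4 - Real.log ε) := by
  have hlog : Real.log ε ≤ ∑ i ∈ s, Real.log (x i) := by
    rw [← Real.log_prod hx]
    exact Real.log_le_log hε hprod
  have hlin : ∑ i ∈ s, (x i - 1) ≤ ∑ i ∈ s, (x i - 1) ^ 2 + s.card / 4 := by
    calc ∑ i ∈ s, (x i - 1) ≤ ∑ i ∈ s, ((x i - 1) ^ 2 + 1 / 4) :=
          Finset.sum_le_sum fun i _ => by linarith [sq_nonneg (x i - 1 - 1 / 2)]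
      _ = ∑ i ∈ s, (x i - 1) ^ 2 + s.card / 4 := by
          rw [Finset.sum_add_distrib, Finset.sum_const, nsmul_eq_mul, mul_one_div]
  rw [Finset.sum_sub_distrib]
  linarith

theorem sum_sub_one_sub_log_le_mul_sum_sq {ε : ℝ} (hε : 0 < ε) (hx : ∀ i ∈ s, 0 < x i)
    (hprod : ε ≤ ∏ i ∈ s, x i) :
    ∑ i ∈ s, (x i - 1 - Real.log (x i)) ≤
      (2 + s.card + 4 * |Real.log ε|) * ∑ i ∈ s, (x i - 1) ^ 2 := by
  set S := ∑ i ∈ s, (x i - 1) ^ 2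
  have hS0 : 0 ≤ S := Finset.sum_nonneg fun i _ => sq_nonneg _
  by_cases hhalf : ∀ i ∈ s, 1 / 2 ≤ x i
  · calc ∑ i ∈ s, (x i - 1 - Real.log (x i)) ≤ S / (1 / 2) :=
          sum_sub_one_sub_log_le_of_forall_le one_half_pos hhalf
      _ = 2 * S := by ring
      _ ≤ (2 + s.card + 4 * |Real.log ε|) * S := by
          gcongr
          rw [add_assoc]
          exact le_add_of_nonneg_right (by positivity)
  · push Not at hhalf
    obtain ⟨k, hk, hxk⟩ := hhalf
    have hS4 : 1 ≤ 4 * S := by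
      have hle : (x k - 1) ^ 2 ≤ S :=
        Finset.single_le_sum (f := fun i => (x i - 1) ^ 2) (fun i _ => sq_nonneg _) hk
      nlinarith
    calc ∑ i ∈ s, (x i - 1 - Real.log (x i)) ≤ S + (s.card / 4 - Real.log ε) :=
          sum_sub_one_sub_log_le_of_le_prod hε (fun i hi => (hx i hi).ne') hprod
      _ ≤ S + (s.card / 4 + |Real.log ε|) * 1 := by linarith [neg_le_abs (Real.log ε)]
      _ ≤ S + (s.card / 4 + |Real.log ε|) * (4 * S) := by gcongr
      _ ≤ (2 + s.card + 4 * |Real.log ε|) * S := by linarith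

end Scalar

section Frobenius

open scoped Matrix Matrix.Norms.Frobenius ComplexOrder

variable {m n 𝕜 : Type*} [Fintype m] [Fintype n] [RCLike 𝕜]

theorem frobenius_norm_sq_eq_sum (A : Matrix m n 𝕜) : ‖A‖ ^ 2 = ∑ i, ∑ j, ‖A i j‖ ^ 2 := by
  rw [Matrix.frobenius_norm_def, ← Real.sqrt_eq_rpow, Real.sq_sqrt (by positivity)]
  simp only [Real.rpow_two]

theorem frobenius_norm_sq_eq_trace (A : Matrix m n 𝕜) :
    ((‖A‖ ^ 2 : ℝ) : 𝕜) = (A * Aᴴ).trace := by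
  rw [frobenius_norm_sq_eq_sum]
  simp [Matrix.trace, Matrix.mul_apply, RCLike.mul_conj]

theorem frobNorm_eq_frobenius_norm {d : ℕ} (A : Matrix (Fin d) (Fin d) ℝ) : frobNorm A = ‖A‖ := by
  rw [frobNorm, Real.sqrt_eq_iff_eq_sq (by positivity) (norm_nonneg A), frobenius_norm_sq_eq_sum]
  simp only [Real.norm_eq_abs, sq_abs]

variable [DecidableEq n]

theorem frobenius_norm_conjStarAlgAut (U : Matrix.unitaryGroup n 𝕜) (A : Matrix n n 𝕜) :
    ‖Unitary.conjStarAlgAut 𝕜 _ U A‖ = ‖A‖ := by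
  rw [← sq_eq_sq₀ (norm_nonneg _) (norm_nonneg _), ← RCLike.ofReal_inj (K := 𝕜),
    frobenius_norm_sq_eq_trace, frobenius_norm_sq_eq_trace, ← Matrix.star_eq_conjTranspose,
    ← map_star, ← map_mul, Unitary.conjStarAlgAut_apply, Matrix.trace_mul_cycle,
    Unitary.coe_star_mul_self, one_mul, Matrix.star_eq_conjTranspose]

variable {M : Matrix n n 𝕜}

theorem frobenius_norm_sq_cfc (hM : M.IsHermitian) (f : ℝ → ℝ) :
    ‖cfc f M‖ ^ 2 = ∑ j, f (hM.eigenvalues j) ^ 2 := by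
  rw [hM.cfc_eq, Matrix.IsHermitian.cfc, frobenius_norm_conjStarAlgAut,
    Matrix.frobenius_norm_diagonal, EuclideanSpace.norm_sq_eq]
  simp

theorem sum_eigenvalues_sub_one_sq (hM : M.IsHermitian) :
    ∑ j, (hM.eigenvalues j - 1) ^ 2 = ‖M - 1‖ ^ 2 := by
  have hsub : cfc (fun x : ℝ => x - 1) M = M - 1 := by
    rw [cfc_sub .., cfc_id' ℝ M, cfc_const_one ℝ M]
  rw [← hsub, frobenius_norm_sq_cfc hM]

theorem eigen_kullback_bound_general (hM : M.PosDef) {ε : ℝ} (hε : 0 < ε)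
    (hdet : ε ≤ RCLike.re M.det) :
    ∑ j, (hM.1.eigenvalues j - 1 - Real.log (hM.1.eigenvalues j)) ≤
        (2 + Fintype.card n + 4 * |Real.log ε|) * ∑ j, (hM.1.eigenvalues j - 1) ^ 2 ∧
      ∑ j, (hM.1.eigenvalues j - 1) ^ 2 = ‖M - 1‖ ^ 2 := by
  rw [hM.1.det_eq_prod_eigenvalues, ← RCLike.ofReal_prod, RCLike.ofReal_re] at hdet
  exact ⟨sum_sub_one_sub_log_le_mul_sum_sq hε (fun j _ => hM.eigenvalues_pos j) hdet,
    sum_eigenvalues_sub_one_sq hM.1⟩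

end Frobenius

/-- for a symmetric positive-definite matrix `M` with `det M ≥ ε`,
`∑ (λⱼ - 1 - log λⱼ) ≤ K(ε,d) ∑ (λⱼ - 1)² = K(ε,d) ‖M - Id‖_F²`,
with a constant `K(ε,d)` depending only on `ε` and `d`. -/
theorem eigen_kullback_bound (d : ℕ) (ε : ℝ) (hε0 : 0 < ε) (hε1 : ε < 1) :
    ∃ K : ℝ, 0 < K ∧
      ∀ (M : Matrix (Fin d) (Fin d) ℝ) (hM : M.PosDef), ε ≤ M.det →
        (∑ j, (hM.1.eigenvalues j - 1 - Real.log (hM.1.eigenvalues j))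
            ≤ K * ∑ j, (hM.1.eigenvalues j - 1) ^ 2) ∧
          (∑ j, (hM.1.eigenvalues j - 1) ^ 2 = frobNorm (M - 1) ^ 2) := by
  simp only [frobNorm_eq_frobenius_norm]
  exact ⟨2 + Fintype.card (Fin d) + 4 * |Real.log ε|, by positivity,
    fun _ hM hdet => eigen_kullback_bound_general hM hε0 hdet⟩

end
end
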